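/- Let X = (X_t)_{t≥0} be a real-valued additive process (X_0 = 0, independent increments, continuous in probability, cadlag paths) with E[X_t] = 0 and E[|X_t|^n] < ∞ for all n ≥ 1 and t ≥ 0. For n ≥ 3, let Y^(n)_t = Σ_{0<s≤t} (ΔX_s)^n − F_n(t) be the n-th Teugels martingale of X. Then the predictable quadratic variation of Y^(n) is ⟨Y^(n)⟩_t = F_{2n}(t); equivalently, the process (Y^(n)_t)^2 − F_{2n}(t) is a martingale with respect to the natural filtration of X. -/

import Mathlib

open MeasureTheory ProbabilityTheory Filter Topology
open scoped NNReal

/-- The Kendall polynomials `Γ_n`, expressing moments in terms of cumulants: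
`Γ_0 = 1` and `Γ_{n+1}(x_1,…,x_{n+1}) = Σ_{j=0}^n C(n,j) Γ_j(x_1,…,x_j) x_{n+1-j}`.
The argument function `x : ℕ → ℝ` encodes the variables `x_1, x_2, …`
(only the values `x 1, …, x n` are used by `kendall n x`). -/
noncomputable def kendall : ℕ → (ℕ → ℝ) → ℝ
  | 0, _ => 1
  | n + 1, x =>
      ∑ j ∈ (Finset.range (n + 1)).attach,
        (n.choose j.1 : ℝ) * kendall j.1 x * x (n + 1 - j.1)
decreasing_by exact Finset.mem_range.mp j.2

/-- A function `f : ℝ≥0 → ℝ` is cadlag: right-continuous with left limits. -/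
def IsCadlag (f : ℝ≥0 → ℝ) : Prop :=
  (∀ t : ℝ≥0, ContinuousWithinAt f (Set.Ici t) t) ∧
    ∀ t : ℝ≥0, 0 < t → ∃ l : ℝ, Tendsto f (𝓝[<] t) (𝓝 l)

/-- The `n`-th variation process `X^{(n)}_t(ω) = Σ_{0<s≤t} (ΔX_s(ω))^n`, where
`ΔX_s = X_s - X_{s-}` and `X_{s-}` is the left limit of the path at `s`. Since a cadlag path
has at most countably many jumps, the unconditional sum `∑'` over all `s ∈ (0, t]` reduces to
the countable sum of the `n`-th powers of the jumps in `(0, t]`. -/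
noncomputable def variationProc {Ω : Type*} (X : ℝ≥0 → Ω → ℝ) (n : ℕ) (t : ℝ≥0) (ω : Ω) :
    ℝ :=
  ∑' s : ℝ≥0, Set.indicator (Set.Ioc 0 t)
    (fun u => (X u ω - Function.leftLim (fun r => X r ω) u) ^ n) s

set_option linter.unusedSectionVars false
/-! ### Pathwise part -/

noncomputable def jmp (f : ℝ≥0 → ℝ) (u : ℝ≥0) : ℝ := f u - Function.leftLim f u

lemma IsCadlag.tendsto_leftLim {f : ℝ≥0 → ℝ} (hf : IsCadlag f) (x : ℝ≥0) :
    Tendsto f (𝓝[<] x) (𝓝 (Function.leftLim f x)) := by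
  rcases eq_or_ne x 0 with rfl | hx
  · simp
  · obtain ⟨l, hl⟩ := hf.2 x (pos_iff_ne_zero.mpr hx)
    have hne : (𝓝[<] x).NeBot := nhdsLT_neBot_of_exists_lt ⟨0, pos_iff_ne_zero.mpr hx⟩
    rw [leftLim_eq_of_tendsto hl]
    exact hl

lemma IsCadlag.local {f : ℝ≥0 → ℝ} (hf : IsCadlag f) (x : ℝ≥0) {ε : ℝ} (hε : 0 < ε) :
    ∃ U : Set ℝ≥0, IsOpen U ∧ x ∈ U ∧
      (∀ u ∈ U, u < x → |f u - Function.leftLim f x| ≤ ε / 2) ∧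
      (∀ u ∈ U, x ≤ u → |f u - f x| ≤ ε / 2) := by
  have h1 : ∀ᶠ u in 𝓝[<] x, |f u - Function.leftLim f x| ≤ ε / 2 := by
    have := (hf.tendsto_leftLim x).eventually (Metric.closedBall_mem_nhds _ (half_pos hε))
    filter_upwards [this] with u hu
    simpa [Real.dist_eq] using hu
  have h2 : ∀ᶠ u in 𝓝[≥] x, |f u - f x| ≤ ε / 2 := by
    have := (hf.1 x).eventually (Metric.closedBall_mem_nhds _ (half_pos hε))
    filter_upwards [this] with u hu
    simpa [Real.dist_eq] using hu
  rw [eventually_nhdsWithin_iff] at h1 h2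
  obtain ⟨U, hU, hUo, hxU⟩ := mem_nhds_iff.1 (h1.and h2)
  exact ⟨U, hUo, hxU, fun u hu => (hU hu).1, fun u hu => (hU hu).2⟩

lemma jmp_le_of_left {f : ℝ≥0 → ℝ} (hf : IsCadlag f) (y : ℝ≥0) (hy : 0 < y) {ε : ℝ}
    (h : ∀ᶠ u in 𝓝[<] y, |f y - f u| ≤ ε) : |jmp f y| ≤ ε := by
  have hne : (𝓝[<] y).NeBot := nhdsLT_neBot_of_exists_lt ⟨0, hy⟩
  have := ((tendsto_const_nhds (x := f y)).sub (hf.tendsto_leftLim y)).abs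
  exact le_of_tendsto this h

lemma cadlag_small {f : ℝ≥0 → ℝ} (hf : IsCadlag f) (T : ℝ≥0) {ε : ℝ} (hε : 0 < ε) :
    ∃ δ > 0, ∀ a b : ℝ≥0, a ≤ b → b ≤ T → dist a b < δ →
      ∃ x, |f b - f a - Set.indicator (Set.Ioc a b) (jmp f) x| ≤ ε ∧
        ∀ y ∈ Set.Ioc a b, y ≠ x → |jmp f y| ≤ ε := by
  choose U hUo hxU hUl hUr using fun x => hf.local x hε
  obtain ⟨δ, hδ, h⟩ := lebesgue_number_lemma_of_metric (isCompact_Icc (a := (0 : ℝ≥0)) (b := T))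
    hUo (fun x _ => Set.mem_iUnion.2 ⟨x, hxU x⟩)
  refine ⟨δ, hδ, fun a b hab hbT hd => ?_⟩
  obtain ⟨x, hx⟩ := h a ⟨zero_le, hab.trans hbT⟩
  have hmem : ∀ u, a ≤ u → u ≤ b → u ∈ U x := by
    intro u hau hub
    apply hx
    rw [Metric.mem_ball, dist_comm]
    refine lt_of_le_of_lt ?_ hd
    rw [NNReal.dist_eq, NNReal.dist_eq, abs_sub_comm, abs_sub_comm (a : ℝ),
      abs_of_nonneg (by simpa using hau), abs_of_nonneg (by simpa using hab)]
    have : (u : ℝ) ≤ b := by exact_mod_cast hub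
    linarith
  refine ⟨x, ?_, ?_⟩
  · have ha := hmem a le_rfl hab
    have hb := hmem b hab le_rfl
    by_cases hax : a < x
    · by_cases hxb : x ≤ b
      · have hxI : x ∈ Set.Ioc a b := ⟨hax, hxb⟩
        rw [Set.indicator_of_mem hxI]
        have h1 := hUl x a ha hax
        have h2 := hUr x b hb hxb
        unfold jmp
        rw [abs_le] at *
        constructor <;> linarith [h1.1, h1.2, h2.1, h2.2]
      · rw [Set.indicator_of_notMem (fun h => hxb h.2)]
        have h1 := hUl x a ha hax
        have h2 := hUl x b hb (not_le.1 hxb)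
        rw [abs_le] at *
        constructor <;> linarith [h1.1, h1.2, h2.1, h2.2]
    · rw [Set.indicator_of_notMem (fun h => hax h.1)]
      have h1 := hUr x a ha (not_lt.1 hax)
      have h2 := hUr x b hb ((not_lt.1 hax).trans hab)
      rw [abs_le] at *
      constructor <;> linarith [h1.1, h1.2, h2.1, h2.2]
  · intro y hy hyx
    have hyU := hmem y hy.1.le hy.2
    refine jmp_le_of_left hf y (lt_of_le_of_lt zero_le hy.1) ?_
    rcases lt_or_gt_of_ne hyx with hlt | hgt
    · filter_upwards [Ioo_mem_nhdsLT hy.1] with u hu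
      have h1 := hUl x y hyU hlt
      have h2 := hUl x u (hmem u hu.1.le (hu.2.le.trans hy.2)) (hu.2.trans hlt)
      rw [abs_le] at *
      constructor <;> linarith [h1.1, h1.2, h2.1, h2.2]
    · filter_upwards [Ioo_mem_nhdsLT hy.1, Ioo_mem_nhdsLT hgt] with u hu hu'
      have h1 := hUr x y hyU hgt.le
      have h2 := hUr x u (hmem u hu.1.le (hu.2.le.trans hy.2)) hu'.1.le
      rw [abs_le] at *
      constructor <;> linarith [h1.1, h1.2, h2.1, h2.2]

/-- partition points -/
noncomputable def pt (s t : ℝ≥0) (N k : ℕ) : ℝ≥0 := s + (t - s) * (k / (N + 1))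

lemma pt_zero (s t : ℝ≥0) (N : ℕ) : pt s t N 0 = s := by simp [pt]

lemma pt_last {s t : ℝ≥0} (h : s ≤ t) (N : ℕ) : pt s t N (N + 1) = t := by
  have : ((N : ℝ≥0) + 1) ≠ 0 := by positivity
  simp [pt, this, h]

lemma pt_mono (s t : ℝ≥0) (N : ℕ) : Monotone (pt s t N) := by
  intro i j hij
  unfold pt
  have : (i : ℝ≥0) ≤ j := by exact_mod_cast hij
  gcongr

lemma pt_le {s t : ℝ≥0} (h : s ≤ t) {N k : ℕ} (hk : k ≤ N + 1) : pt s t N k ≤ t := by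
  have := pt_mono s t N hk
  rwa [pt_last h N] at this

lemma pt_ge (s t : ℝ≥0) (N k : ℕ) : s ≤ pt s t N k := by
  simp [pt]

lemma pt_mesh (s t : ℝ≥0) {δ : ℝ} (hδ : 0 < δ) :
    ∀ᶠ N : ℕ in atTop, ∀ k, dist (pt s t N k) (pt s t N (k + 1)) < δ := by
  have h : Tendsto (fun N : ℕ => ((t - s : ℝ≥0) : ℝ) * (1 / ((N : ℝ) + 1))) atTop (𝓝 (((t - s : ℝ≥0) : ℝ) * 0)) :=
    tendsto_one_div_add_atTop_nhds_zero_nat.const_mul _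
  rw [mul_zero] at h
  filter_upwards [h.eventually (gt_mem_nhds hδ)] with N hN k
  rw [NNReal.dist_eq, abs_sub_comm, abs_of_nonneg]
  · refine lt_of_le_of_lt (le_of_eq ?_) hN
    unfold pt
    push_cast
    ring
  · have := pt_mono s t N (Nat.le_succ k)
    simp [this]

lemma hasSum_Ioc_partition {α : Type*} [AddCommMonoid α] [TopologicalSpace α] [ContinuousAdd α]
    (p : ℕ → ℝ≥0) (hp : Monotone p) (h : ℝ≥0 → α) (a : ℕ → α) (M : ℕ)
    (ha : ∀ k < M, HasSum (Set.indicator (Set.Ioc (p k) (p (k + 1))) h) (a k)) :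
    HasSum (Set.indicator (Set.Ioc (p 0) (p M)) h) (∑ k ∈ Finset.range M, a k) := by
  induction M with
  | zero => simpa using hasSum_zero
  | succ M ih =>
    rw [Finset.sum_range_succ]
    have h1 := (ih fun k hk => ha k (hk.trans (Nat.lt_succ_self M))).add (ha M (Nat.lt_succ_self M))
    rw [← Set.Ioc_union_Ioc_eq_Ioc (hp (Nat.zero_le M)) (hp (Nat.le_succ M))]
    convert h1 using 1
    rw [Set.indicator_union_of_disjoint]
    rw [Set.disjoint_left]
    intro x hx hx'
    exact absurd hx.2 (not_le.2 hx'.1)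

/-- increments over the partition -/
noncomputable def incr (f : ℝ≥0 → ℝ) (s t : ℝ≥0) (N k : ℕ) : ℝ :=
  f (pt s t N (k + 1)) - f (pt s t N k)

lemma cadlag_partition {f : ℝ≥0 → ℝ} (hf : IsCadlag f) {s t : ℝ≥0} (hst : s ≤ t)
    {ε : ℝ} (hε : 0 < ε) :
    ∀ᶠ N : ℕ in atTop, ∀ k < N + 1,
      ∃ x, |incr f s t N k - Set.indicator (Set.Ioc (pt s t N k) (pt s t N (k+1))) (jmp f) x| ≤ ε ∧
        ∀ y ∈ Set.Ioc (pt s t N k) (pt s t N (k+1)), y ≠ x → |jmp f y| ≤ ε := by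
  obtain ⟨δ, hδ, h⟩ := cadlag_small hf t hε
  filter_upwards [pt_mesh s t hδ] with N hN k hk
  exact h _ _ (pt_mono s t N (Nat.le_succ k)) (pt_le hst hk) (hN k)

noncomputable def phi (n : ℕ) (e x : ℝ) : ENNReal := ENNReal.ofReal ((max (x - e) 0) ^ n)

/-- sum of positive jumps to power `n` -/
noncomputable def Apos (f : ℝ≥0 → ℝ) (s t : ℝ≥0) (n : ℕ) (e : ℝ) : ENNReal :=
  ∑' u, Set.indicator (Set.Ioc s t) (fun u => phi n e (jmp f u)) u

noncomputable def Bpos (f : ℝ≥0 → ℝ) (s t : ℝ≥0) (n : ℕ) (e : ℝ) (N : ℕ) : ENNReal :=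
  ∑ k ∈ Finset.range (N + 1), phi n e (incr f s t N k)

lemma phi_mono (n : ℕ) {e e' x x' : ℝ} (h : x - e ≤ x' - e') : phi n e x ≤ phi n e' x' := by
  unfold phi
  gcongr

lemma phi_zero {n : ℕ} (hn : n ≠ 0) {e x : ℝ} (h : x ≤ e) : phi n e x = 0 := by
  unfold phi
  rw [max_eq_right (by linarith)]
  simp [hn]

lemma Apos_partition (f : ℝ≥0 → ℝ) {s t : ℝ≥0} (hst : s ≤ t) (n : ℕ) (e : ℝ) (N : ℕ) :
    Apos f s t n e = ∑ k ∈ Finset.range (N + 1), Apos f (pt s t N k) (pt s t N (k+1)) n e := by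
  have := hasSum_Ioc_partition (pt s t N) (pt_mono s t N) (fun u => phi n e (jmp f u))
    (fun k => Apos f (pt s t N k) (pt s t N (k+1)) n e) (N + 1)
    (fun k _ => ENNReal.summable.hasSum)
  rw [pt_zero, pt_last hst] at this
  exact this.tsum_eq

lemma Apos_le_Bpos {f : ℝ≥0 → ℝ} (hf : IsCadlag f) {s t : ℝ≥0} (hst : s ≤ t) {n : ℕ} (hn : n ≠ 0)
    {e e' : ℝ} (he' : 0 ≤ e') (h : e' < e) :
    ∀ᶠ N : ℕ in atTop, Apos f s t n e ≤ Bpos f s t n e' N := by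
  have hε : 0 < (e - e') := by linarith
  filter_upwards [cadlag_partition hf hst hε] with N hN
  rw [Apos_partition f hst n e N]
  unfold Bpos
  refine Finset.sum_le_sum fun k hk => ?_
  obtain ⟨x, hx, hy⟩ := hN k (Finset.mem_range.1 hk)
  unfold Apos
  rw [tsum_eq_single x]
  · by_cases hxI : x ∈ Set.Ioc (pt s t N k) (pt s t N (k+1))
    · rw [Set.indicator_of_mem hxI] at hx ⊢
      apply phi_mono
      rw [abs_le] at hx
      linarith [hx.1]
    · rw [Set.indicator_of_notMem hxI]; exact zero_le
  · intro y hyx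
    by_cases hyI : y ∈ Set.Ioc (pt s t N k) (pt s t N (k+1))
    · rw [Set.indicator_of_mem hyI]
      apply phi_zero hn
      have := hy y hyI hyx
      linarith [le_abs_self (jmp f y)]
    · rw [Set.indicator_of_notMem hyI]

lemma Bpos_le_Apos {f : ℝ≥0 → ℝ} (hf : IsCadlag f) {s t : ℝ≥0} (hst : s ≤ t) {n : ℕ} (hn : n ≠ 0)
    {e e' : ℝ} (he' : 0 ≤ e') (h : e' < e) :
    ∀ᶠ N : ℕ in atTop, Bpos f s t n e N ≤ Apos f s t n e' := by
  have hε : 0 < (e - e') := by linarith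
  filter_upwards [cadlag_partition hf hst hε] with N hN
  rw [Apos_partition f hst n e' N]
  unfold Bpos
  refine Finset.sum_le_sum fun k hk => ?_
  obtain ⟨x, hx, -⟩ := hN k (Finset.mem_range.1 hk)
  unfold Apos
  refine le_trans ?_ (ENNReal.le_tsum x)
  rw [abs_le] at hx
  by_cases hxI : x ∈ Set.Ioc (pt s t N k) (pt s t N (k+1))
  · rw [Set.indicator_of_mem hxI] at hx ⊢
    apply phi_mono
    linarith [hx.2]
  · rw [Set.indicator_of_notMem hxI] at hx
    rw [phi_zero hn (by linarith [hx.2])]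
    exact zero_le

noncomputable def ee (j : ℕ) : ℝ := 1 / ((j : ℝ) + 1)

lemma ee_pos (j : ℕ) : 0 < ee j := Nat.one_div_pos_of_nat
lemma ee_succ (j : ℕ) : ee (j + 1) < ee j := by
  unfold ee
  push_cast
  apply one_div_lt_one_div_of_lt <;> [positivity; linarith]

lemma Apos_zero_eq_iSup (f : ℝ≥0 → ℝ) (s t : ℝ≥0) (n : ℕ) :
    Apos f s t n 0 = ⨆ j, Apos f s t n (ee j) := by
  apply le_antisymm
  · unfold Apos
    rw [ENNReal.tsum_eq_iSup_sum]
    refine iSup_le fun J => ?_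
    have hlim : Tendsto (fun j => ∑ u ∈ J, Set.indicator (Set.Ioc s t) (fun u => phi n (ee j) (jmp f u)) u)
        atTop (𝓝 (∑ u ∈ J, Set.indicator (Set.Ioc s t) (fun u => phi n 0 (jmp f u)) u)) := by
      refine tendsto_finsetSum _ fun u _ => ?_
      by_cases hu : u ∈ Set.Ioc s t
      · simp only [Set.indicator_of_mem hu]
        unfold phi
        have h0 : Tendsto ee atTop (𝓝 0) := tendsto_one_div_add_atTop_nhds_zero_nat
        refine ENNReal.tendsto_ofReal ?_
        exact (((tendsto_const_nhds.sub h0).max tendsto_const_nhds).pow n)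
      · simp only [Set.indicator_of_notMem hu]
        exact tendsto_const_nhds
    refine le_of_tendsto' hlim fun j => ?_
    exact (ENNReal.sum_le_tsum J).trans (le_iSup (fun j => ∑' u, Set.indicator (Set.Ioc s t) (fun u => phi n (ee j) (jmp f u)) u) j)
  · refine iSup_le fun j => ?_
    unfold Apos
    refine ENNReal.tsum_le_tsum fun u => ?_
    apply Set.indicator_le_indicator
    apply phi_mono
    linarith [ee_pos j]

lemma Apos_eq {f : ℝ≥0 → ℝ} (hf : IsCadlag f) {s t : ℝ≥0} (hst : s ≤ t) {n : ℕ} (hn : n ≠ 0) :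
    Apos f s t n 0 = ⨆ j, liminf (fun N => Bpos f s t n (ee j) N) atTop := by
  apply le_antisymm
  · rw [Apos_zero_eq_iSup]
    refine iSup_le fun j => ?_
    refine le_trans ?_ (le_iSup _ (j + 1))
    exact le_liminf_of_le (by isBoundedDefault)
      (Apos_le_Bpos hf hst hn (ee_pos (j+1)).le (ee_succ j))
  · refine iSup_le fun j => ?_
    exact liminf_le_of_frequently_le' (Bpos_le_Apos hf hst hn le_rfl (ee_pos j)).frequently

lemma Apos_le_liminf {f : ℝ≥0 → ℝ} (hf : IsCadlag f) {s t : ℝ≥0} (hst : s ≤ t) {n : ℕ} (hn : n ≠ 0) :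
    Apos f s t n 0 ≤ liminf (fun N => Bpos f s t n 0 N) atTop := by
  rw [Apos_eq hf hst hn]
  refine iSup_le fun j => ?_
  refine liminf_le_liminf (Eventually.of_forall fun N => ?_)
  unfold Bpos
  refine Finset.sum_le_sum fun k _ => phi_mono n (by linarith [ee_pos j])

lemma IsCadlag.neg {f : ℝ≥0 → ℝ} (hf : IsCadlag f) : IsCadlag (fun u => - f u) :=
  ⟨fun t => (hf.1 t).neg, fun t ht => by
    obtain ⟨l, hl⟩ := hf.2 t ht
    exact ⟨-l, hl.neg⟩⟩

lemma jmp_neg {f : ℝ≥0 → ℝ} (hf : IsCadlag f) {u : ℝ≥0} (hu : 0 < u) :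
    jmp (fun u => - f u) u = - jmp f u := by
  have hne : (𝓝[<] u).NeBot := nhdsLT_neBot_of_exists_lt ⟨0, hu⟩
  unfold jmp
  rw [leftLim_eq_of_tendsto (hf.tendsto_leftLim u).neg]
  ring

noncomputable def jsum (f : ℝ≥0 → ℝ) (s t : ℝ≥0) (m : ℕ) : ℝ :=
  ∑' u, Set.indicator (Set.Ioc s t) (fun u => jmp f u ^ m) u

noncomputable def jabs (f : ℝ≥0 → ℝ) (s t : ℝ≥0) (m : ℕ) : ℝ :=
  ∑' u, Set.indicator (Set.Ioc s t) (fun u => |jmp f u| ^ m) u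

noncomputable def Qe (f : ℝ≥0 → ℝ) (s t : ℝ≥0) (m : ℕ) : ENNReal :=
  ∑' u, Set.indicator (Set.Ioc s t) (fun u => ENNReal.ofReal (|jmp f u| ^ m)) u

def JSummable (f : ℝ≥0 → ℝ) (s t : ℝ≥0) (m : ℕ) : Prop :=
  Summable (Set.indicator (Set.Ioc s t) (fun u => |jmp f u| ^ m))

lemma phi_add_phi {m : ℕ} (hm : m ≠ 0) (x : ℝ) :
    phi m 0 x + phi m 0 (-x) = ENNReal.ofReal (|x| ^ m) := by
  unfold phi
  rcases le_total 0 x with h | h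
  · simp [h, abs_of_nonneg h, hm]
  · simp [h, abs_of_nonpos h, hm]

lemma Apos_neg {f : ℝ≥0 → ℝ} (hf : IsCadlag f) (s t : ℝ≥0) (m : ℕ) :
    Apos (fun u => - f u) s t m 0 =
      ∑' u, Set.indicator (Set.Ioc s t) (fun u => phi m 0 (- jmp f u)) u := by
  unfold Apos
  congr 1
  ext u
  by_cases hu : u ∈ Set.Ioc s t
  · simp only [Set.indicator_of_mem hu]
    rw [jmp_neg hf (lt_of_le_of_lt zero_le hu.1)]
  · simp only [Set.indicator_of_notMem hu]

lemma Qe_eq {f : ℝ≥0 → ℝ} (hf : IsCadlag f) (s t : ℝ≥0) {m : ℕ} (hm : m ≠ 0) :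
    Qe f s t m = Apos f s t m 0 + Apos (fun u => - f u) s t m 0 := by
  rw [Apos_neg hf]
  unfold Apos Qe
  rw [← ENNReal.tsum_add]
  congr 1
  ext u
  by_cases hu : u ∈ Set.Ioc s t
  · simp only [Set.indicator_of_mem hu]
    rw [phi_add_phi hm]
  · simp only [Set.indicator_of_notMem hu, add_zero]

lemma indicator_ofReal (S : Set ℝ≥0) (h : ℝ≥0 → ℝ) (u : ℝ≥0) :
    Set.indicator S (fun u => ENNReal.ofReal (h u)) u = ENNReal.ofReal (Set.indicator S h u) := by
  by_cases hu : u ∈ S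
  · simp only [Set.indicator_of_mem hu]
  · simp only [Set.indicator_of_notMem hu, ENNReal.ofReal_zero]

lemma summable_of_tsum_ofReal {h : ℝ≥0 → ℝ} (h0 : ∀ u, 0 ≤ h u)
    (hs : ∑' u, ENNReal.ofReal (h u) ≠ ⊤) : Summable h := by
  have := ENNReal.summable_toReal hs
  refine this.congr fun u => ?_
  rw [ENNReal.toReal_ofReal (h0 u)]

lemma jabs_nonneg_aux (f : ℝ≥0 → ℝ) (s t : ℝ≥0) (m : ℕ) (u : ℝ≥0) :
    0 ≤ Set.indicator (Set.Ioc s t) (fun u => |jmp f u| ^ m) u :=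
  Set.indicator_nonneg (fun _ _ => by positivity) u

lemma jsummable_iff {f : ℝ≥0 → ℝ} {s t : ℝ≥0} {m : ℕ} :
    JSummable f s t m ↔ Qe f s t m ≠ ⊤ := by
  unfold JSummable Qe
  simp only [indicator_ofReal]
  constructor
  · intro h
    exact h.tsum_ofReal_ne_top
  · exact summable_of_tsum_ofReal (jabs_nonneg_aux f s t m)

lemma ofReal_jabs {f : ℝ≥0 → ℝ} {s t : ℝ≥0} {m : ℕ} (h : JSummable f s t m) :
    ENNReal.ofReal (jabs f s t m) = Qe f s t m := by
  unfold jabs Qe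
  rw [ENNReal.ofReal_tsum_of_nonneg (jabs_nonneg_aux f s t m) h]
  simp only [indicator_ofReal]

lemma jsummable_iff' {f : ℝ≥0 → ℝ} {s t : ℝ≥0} {m : ℕ} :
    Summable (Set.indicator (Set.Ioc s t) (fun u => jmp f u ^ m)) ↔ JSummable f s t m := by
  unfold JSummable
  rw [← summable_abs_iff]
  apply summable_congr
  intro u
  by_cases hu : u ∈ Set.Ioc s t
  · simp only [Set.indicator_of_mem hu, abs_pow]
  · simp only [Set.indicator_of_notMem hu, abs_zero]

lemma abs_jsum_le {f : ℝ≥0 → ℝ} {s t : ℝ≥0} {m : ℕ} (h : JSummable f s t m) :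
    |jsum f s t m| ≤ jabs f s t m := by
  unfold jsum jabs
  have : (fun u => ‖Set.indicator (Set.Ioc s t) (fun u => jmp f u ^ m) u‖) =
      Set.indicator (Set.Ioc s t) (fun u => |jmp f u| ^ m) := by
    ext u
    by_cases hu : u ∈ Set.Ioc s t
    · simp only [Set.indicator_of_mem hu, norm_pow, Real.norm_eq_abs]
    · simp only [Set.indicator_of_notMem hu, norm_zero]
  rw [← this, ← Real.norm_eq_abs]
  apply norm_tsum_le_tsum_norm
  rw [this]; exact h

lemma pow_eq_pos_neg {m : ℕ} (hm : m ≠ 0) (x : ℝ) :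
    x ^ m = (phi m 0 x).toReal + (-1) ^ m * (phi m 0 (-x)).toReal := by
  unfold phi
  rw [ENNReal.toReal_ofReal (by positivity), ENNReal.toReal_ofReal (by positivity)]
  rcases le_total 0 x with h | h
  · simp [h, hm]
  · simp [h, hm, ← mul_pow]

lemma jsum_eq {f : ℝ≥0 → ℝ} (hf : IsCadlag f) (s t : ℝ≥0) {m : ℕ} (hm : m ≠ 0) :
    jsum f s t m = if Apos f s t m 0 + Apos (fun u => - f u) s t m 0 = ⊤ then 0 else
      (Apos f s t m 0).toReal + (-1) ^ m * (Apos (fun u => - f u) s t m 0).toReal := by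
  split_ifs with h
  · unfold jsum
    apply tsum_eq_zero_of_not_summable
    rw [jsummable_iff', jsummable_iff, Qe_eq hf s t hm]
    simp [h]
  · have h1 : Apos f s t m 0 ≠ ⊤ := fun h' => h (by simp [h'])
    have h2 : Apos (fun u => - f u) s t m 0 ≠ ⊤ := fun h' => h (by simp [h'])
    rw [Apos_neg hf] at h2 ⊢
    unfold Apos at h1 ⊢
    rw [ENNReal.tsum_toReal_eq (ENNReal.ne_top_of_tsum_ne_top h1),
      ENNReal.tsum_toReal_eq (ENNReal.ne_top_of_tsum_ne_top h2), ← tsum_mul_left,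
      ← (ENNReal.summable_toReal h1).tsum_add ((ENNReal.summable_toReal h2).mul_left _)]
    unfold jsum
    congr 1
    ext u
    by_cases hu : u ∈ Set.Ioc s t
    · simp only [Set.indicator_of_mem hu]
      exact pow_eq_pos_neg hm _
    · simp only [Set.indicator_of_notMem hu]
      simp

lemma pow_sub_pow_bound (n : ℕ) (x y e : ℝ) (h : |x - y| ≤ e) :
    |x ^ (n + 1) - y ^ (n + 1)| ≤ (n + 1) * e * (|x| ^ n + |y| ^ n) := by
  have h1 := abs_pow_sub_pow_le x y (n + 1)
  have h2 : max |x| |y| ^ n ≤ |x| ^ n + |y| ^ n := by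
    rcases max_cases |x| |y| with h | h <;> rw [h.1] <;>
      linarith [pow_nonneg (abs_nonneg x) n, pow_nonneg (abs_nonneg y) n]
  have he : 0 ≤ e := (abs_nonneg _).trans h
  calc _ ≤ _ := h1
    _ ≤ e * ((n : ℝ) + 1) * (|x| ^ n + |y| ^ n) := by
      push_cast
      gcongr
    _ = _ := by ring

lemma JSummable.mono {f : ℝ≥0 → ℝ} {s t a b : ℝ≥0} {m : ℕ} (h : JSummable f s t m)
    (hab : Set.Ioc a b ⊆ Set.Ioc s t) : JSummable f a b m := by
  refine Summable.of_nonneg_of_le (jabs_nonneg_aux f a b m) (fun u => ?_) h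
  exact Set.indicator_le_indicator_of_subset hab (fun _ => by positivity) u

lemma local_error {f : ℝ≥0 → ℝ} {a b : ℝ≥0} {n : ℕ} {e d : ℝ} {x : ℝ≥0} (hn : n ≠ 0) (he : 0 ≤ e)
    (h1 : JSummable f a b n) (h2 : JSummable f a b (n + 1))
    (hx : |d - Set.indicator (Set.Ioc a b) (jmp f) x| ≤ e)
    (hy : ∀ y ∈ Set.Ioc a b, y ≠ x → |jmp f y| ≤ e) :
    |d ^ (n + 1) - jsum f a b (n + 1)| ≤ (n + 2) * e * (|d| ^ n + jabs f a b n) := by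
  set c := Set.indicator (Set.Ioc a b) (jmp f) x with hc
  have hcpow : ∀ m, m ≠ 0 → c ^ m = Set.indicator (Set.Ioc a b) (fun u => jmp f u ^ m) x := by
    intro m hm
    by_cases hxI : x ∈ Set.Ioc a b
    · simp only [hc, Set.indicator_of_mem hxI]
    · simp only [hc, Set.indicator_of_notMem hxI]; simp [hm]
  have hcabs : |c| ^ n ≤ jabs f a b n := by
    have := h1.le_tsum x (fun u _ => jabs_nonneg_aux f a b n u)
    refine le_trans (le_of_eq ?_) this
    by_cases hxI : x ∈ Set.Ioc a b
    · simp only [hc, Set.indicator_of_mem hxI]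
    · simp only [hc, Set.indicator_of_notMem hxI]; simp [hn]
  have hb1 := pow_sub_pow_bound n d c e hx
  have hb2 : |jsum f a b (n + 1) - c ^ (n + 1)| ≤ e * jabs f a b n := by
    have hs : HasSum (fun u => Set.indicator (Set.Ioc a b) (fun u => jmp f u ^ (n + 1)) u -
        (if u = x then c ^ (n + 1) else 0)) (jsum f a b (n + 1) - c ^ (n + 1)) :=
      ((jsummable_iff'.2 h2).hasSum).sub (hasSum_ite_eq x _)
    have hs2 : HasSum (fun u => e * Set.indicator (Set.Ioc a b) (fun u => |jmp f u| ^ n) u)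
      (e * jabs f a b n) := h1.hasSum.mul_left e
    rw [← hs.tsum_eq, ← Real.norm_eq_abs]
    refine tsum_of_norm_bounded hs2 fun u => ?_
    rw [Real.norm_eq_abs]
    by_cases hux : u = x
    · rw [if_pos hux, hux, ← hcpow _ (Nat.succ_ne_zero n), sub_self, abs_zero]
      exact mul_nonneg he (jabs_nonneg_aux f a b n _)
    · rw [if_neg hux, sub_zero]
      by_cases hu : u ∈ Set.Ioc a b
      · simp only [Set.indicator_of_mem hu]
        rw [abs_pow, pow_succ, mul_comm]
        gcongr
        exact hy u hu hux
      · simp only [Set.indicator_of_notMem hu]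
        simp
  have : d ^ (n + 1) - jsum f a b (n + 1) =
    (d ^ (n + 1) - c ^ (n + 1)) - (jsum f a b (n + 1) - c ^ (n + 1)) := by ring
  rw [this]
  have hd : 0 ≤ e * |d| ^ n := by positivity
  have hcc : ((n : ℝ) + 1) * e * |c| ^ n ≤ (n + 1) * e * jabs f a b n := by gcongr
  refine (abs_sub _ _).trans ?_
  nlinarith

lemma partition_error {f : ℝ≥0 → ℝ} (hf : IsCadlag f) {s t : ℝ≥0} (hst : s ≤ t) {n : ℕ} (hn : n ≠ 0)
    (h1 : JSummable f s t n) (h2 : JSummable f s t (n + 1)) {e : ℝ} (he : 0 < e) :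
    ∀ᶠ N in atTop, |∑ k ∈ Finset.range (N + 1), incr f s t N k ^ (n + 1) - jsum f s t (n + 1)| ≤
      (n + 2) * e * (∑ k ∈ Finset.range (N + 1), |incr f s t N k| ^ n + jabs f s t n) := by
  filter_upwards [cadlag_partition hf hst he] with N hN
  have hsub : ∀ k < N + 1, Set.Ioc (pt s t N k) (pt s t N (k+1)) ⊆ Set.Ioc s t := fun k hk =>
    Set.Ioc_subset_Ioc (pt_ge s t N k) (pt_le hst hk)
  have hA : jsum f s t (n + 1) =
      ∑ k ∈ Finset.range (N + 1), jsum f (pt s t N k) (pt s t N (k+1)) (n + 1) := by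
    have := hasSum_Ioc_partition (pt s t N) (pt_mono s t N) (fun u => jmp f u ^ (n + 1))
      (fun k => jsum f (pt s t N k) (pt s t N (k+1)) (n + 1)) (N + 1)
      (fun k hk => (jsummable_iff'.2 (h2.mono (hsub k hk))).hasSum)
    rw [pt_zero, pt_last hst] at this
    exact this.tsum_eq
  have hB : jabs f s t n =
      ∑ k ∈ Finset.range (N + 1), jabs f (pt s t N k) (pt s t N (k+1)) n := by
    have := hasSum_Ioc_partition (pt s t N) (pt_mono s t N) (fun u => |jmp f u| ^ n)
      (fun k => jabs f (pt s t N k) (pt s t N (k+1)) n) (N + 1)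
      (fun k hk => (h1.mono (hsub k hk)).hasSum)
    rw [pt_zero, pt_last hst] at this
    exact this.tsum_eq
  rw [hA, hB, ← Finset.sum_sub_distrib, ← Finset.sum_add_distrib, Finset.mul_sum]
  refine (Finset.abs_sum_le_sum_abs _ _).trans (Finset.sum_le_sum fun k hk => ?_)
  have hk' := Finset.mem_range.1 hk
  obtain ⟨x, hx, hy⟩ := hN k hk'
  exact local_error hn he.le (h1.mono (hsub k hk')) (h2.mono (hsub k hk')) hx hy

lemma ofReal_abs_incr_sum (f : ℝ≥0 → ℝ) (s t : ℝ≥0) {n : ℕ} (hn : n ≠ 0) (N : ℕ) :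
    ENNReal.ofReal (∑ k ∈ Finset.range (N + 1), |incr f s t N k| ^ n) =
      Bpos f s t n 0 N + Bpos (fun u => - f u) s t n 0 N := by
  unfold Bpos
  rw [ENNReal.ofReal_sum_of_nonneg (fun _ _ => by positivity), ← Finset.sum_add_distrib]
  refine Finset.sum_congr rfl fun k _ => ?_
  rw [← phi_add_phi hn]
  congr 2
  unfold incr
  ring

/-- Fatou type bound. -/
lemma Qe_le_liminf {f : ℝ≥0 → ℝ} (hf : IsCadlag f) {s t : ℝ≥0} (hst : s ≤ t) {n : ℕ} (hn : n ≠ 0) :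
    Qe f s t n ≤ 2 * liminf (fun N =>
      ENNReal.ofReal (∑ k ∈ Finset.range (N + 1), |incr f s t N k| ^ n)) atTop := by
  rw [Qe_eq hf s t hn, two_mul]
  simp only [ofReal_abs_incr_sum f s t hn]
  refine add_le_add ((Apos_le_liminf hf hst hn).trans ?_) ((Apos_le_liminf hf.neg hst hn).trans ?_)
  · exact liminf_le_liminf (Eventually.of_forall fun N => le_self_add)
  · exact liminf_le_liminf (Eventually.of_forall fun N => le_add_self)

/-! ### Kendall polynomials -/

lemma kendall_zero (x : ℕ → ℝ) : kendall 0 x = 1 := by rw [kendall]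

lemma kendall_succ (n : ℕ) (x : ℕ → ℝ) :
    kendall (n + 1) x = ∑ j ∈ Finset.range (n + 1), (n.choose j : ℝ) * kendall j x * x (n + 1 - j) := by
  rw [kendall]
  exact Finset.sum_attach (Finset.range (n + 1))
    (fun j => (n.choose j : ℝ) * kendall j x * x (n + 1 - j))

noncomputable def egf (a : ℕ → ℝ) : PowerSeries ℝ := PowerSeries.mk fun n => a n / n.factorial

lemma coeff_egf_mul (a b : ℕ → ℝ) (n : ℕ) :
    PowerSeries.coeff n (egf a * egf b) =
      (∑ j ∈ Finset.range (n + 1), (n.choose j : ℝ) * a j * b (n - j)) / n.factorial := by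
  rw [PowerSeries.coeff_mul, Finset.Nat.sum_antidiagonal_eq_sum_range_succ_mk, Finset.sum_div]
  refine Finset.sum_congr rfl fun j hj => ?_
  have hj' : j ≤ n := Nat.lt_succ_iff.1 (Finset.mem_range.1 hj)
  simp only [egf, PowerSeries.coeff_mk]
  rw [Nat.cast_choose ℝ hj']
  have h1 : (n.factorial : ℝ) ≠ 0 := by positivity
  have h2 : (j.factorial : ℝ) ≠ 0 := by positivity
  have h3 : ((n - j).factorial : ℝ) ≠ 0 := by positivity
  field_simp

lemma derivative_egf (a : ℕ → ℝ) :
    PowerSeries.derivative ℝ (egf a) = egf (fun n => a (n + 1)) := by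
  ext n
  rw [PowerSeries.coeff_derivative]
  simp only [egf, PowerSeries.coeff_mk, Nat.factorial_succ]
  have h1 : (n.factorial : ℝ) ≠ 0 := by positivity
  push_cast
  field_simp

lemma derivative_kendall (x : ℕ → ℝ) :
    PowerSeries.derivative ℝ (egf fun n => kendall n x) =
      egf (fun n => kendall n x) * egf (fun n => x (n + 1)) := by
  rw [derivative_egf]
  ext n
  rw [coeff_egf_mul]
  simp only [egf, PowerSeries.coeff_mk]
  rw [kendall_succ]
  congr 1
  refine Finset.sum_congr rfl fun j hj => ?_
  have hj' : j ≤ n := Nat.lt_succ_iff.1 (Finset.mem_range.1 hj)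
  rw [Nat.sub_add_comm hj']

lemma kendall_add (x y : ℕ → ℝ) (n : ℕ) :
    kendall n (fun k => x k + y k) =
      ∑ j ∈ Finset.range (n + 1), (n.choose j : ℝ) * kendall j x * kendall (n - j) y := by
  set c : ℕ → ℝ := fun n => ∑ j ∈ Finset.range (n + 1), (n.choose j : ℝ) * kendall j x * kendall (n - j) y
    with hc
  have hP : egf c = egf (fun n => kendall n x) * egf (fun n => kendall n y) := by
    ext n
    rw [coeff_egf_mul]
    simp [egf, hc]
  have hxy : egf (fun n => x (n + 1)) + egf (fun n => y (n + 1)) = egf (fun n => x (n + 1) + y (n + 1)) := by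
    ext n
    simp only [egf, map_add, PowerSeries.coeff_mk]
    ring
  have hD : egf (fun n => c (n + 1)) = egf c * egf (fun n => x (n + 1) + y (n + 1)) := by
    rw [← derivative_egf, hP, Derivation.leibniz, derivative_kendall, derivative_kendall, ← hxy]
    simp only [smul_eq_mul]
    ring
  have hrec : ∀ n, c (n + 1) = ∑ j ∈ Finset.range (n + 1), (n.choose j : ℝ) * c j * (x (n + 1 - j) + y (n + 1 - j)) := by
    intro n
    have := congrArg (PowerSeries.coeff n) hD
    rw [coeff_egf_mul] at this
    simp only [egf, PowerSeries.coeff_mk] at this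
    have h1 : (n.factorial : ℝ) ≠ 0 := by positivity
    rw [div_left_inj' h1] at this
    rw [this]
    refine Finset.sum_congr rfl fun j hj => ?_
    have hj' : j ≤ n := Nat.lt_succ_iff.1 (Finset.mem_range.1 hj)
    rw [Nat.sub_add_comm hj']
  change _ = c n
  induction n using Nat.strong_induction_on with
  | _ n ih =>
    cases n with
    | zero => simp [hc, kendall_zero]
    | succ n =>
      rw [kendall_succ, hrec]
      refine Finset.sum_congr rfl fun j hj => ?_
      rw [ih j (Finset.mem_range.1 hj)]

/-! ### elementary inequalities -/

lemma pow_ge_pos (m : ℕ) (hm : 3 ≤ m) (a b : ℝ) (ha : 0 ≤ a) (hb : 0 ≤ b) :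
    a ^ m + b ^ m + m * a * b ^ (m - 1) + m * a ^ (m - 1) * b ≤ (a + b) ^ m := by
  induction m, hm using Nat.le_induction with
  | base => norm_num; nlinarith
  | succ m hm ih =>
    obtain ⟨q, rfl⟩ : ∃ q, m = q + 1 := ⟨m - 1, by omega⟩
    simp only [Nat.add_sub_cancel] at ih ⊢
    have h1 := mul_le_mul_of_nonneg_right ih (add_nonneg ha hb)
    rw [← pow_succ] at h1
    refine le_trans ?_ h1
    have h2 : 0 ≤ ((q : ℝ) + 1) * (a ^ 2 * b ^ q + a ^ q * b ^ 2) := by positivity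
    push_cast
    ring_nf at h2 ⊢
    nlinarith

lemma tangent_pow (p : ℕ) (a b : ℝ) :
    b ^ (2 * p) + (2 * p : ℕ) * a * b ^ (2 * p - 1) ≤ (a + b) ^ (2 * p) := by
  rcases Nat.eq_zero_or_pos p with rfl | hp
  · simp
  rcases eq_or_ne b 0 with rfl | hb
  · have h1 : 2 * p - 1 ≠ 0 := by omega
    have h2 : 2 * p ≠ 0 := by omega
    simp only [ne_eq, h2, h1, not_false_eq_true, zero_pow, add_zero, mul_zero]
    exact (even_two_mul p).pow_nonneg a
  · have key : ∀ x : ℝ, 1 + (2 * p : ℕ) * x ≤ (1 + x) ^ (2 * p) := by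
      intro x
      rcases le_or_gt (-2) x with h | h
      · exact one_add_mul_le_pow h _
      · have h1 : 0 ≤ (1 + x) ^ (2 * p) := (even_two_mul p).pow_nonneg _
        have h2 : (1 : ℝ) ≤ ((2 * p : ℕ) : ℝ) := by exact_mod_cast (by omega : 1 ≤ 2 * p)
        nlinarith
    have h1 := mul_le_mul_of_nonneg_left (key (a / b)) ((even_two_mul p).pow_nonneg b)
    rw [← mul_pow, mul_add, mul_one, show b * (1 + a / b) = a + b by field_simp; ring] at h1
    refine le_trans (le_of_eq ?_) h1
    obtain ⟨q, hq⟩ : ∃ q, 2 * p = q + 1 := ⟨2 * p - 1, by omega⟩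
    rw [hq, Nat.add_sub_cancel]
    field_simp
    ring

lemma pow_superadd (p : ℕ) (hp : 2 ≤ p) (a b : ℝ) :
    a ^ (2 * p) + b ^ (2 * p) + (2 * p : ℕ) * a * b ^ (2 * p - 1) + (2 * p : ℕ) * a ^ (2 * p - 1) * b
      ≤ (a + b) ^ (2 * p) := by
  have hodd : Odd (2 * p - 1) := ⟨p - 1, by omega⟩
  have hneg : ∀ a b : ℝ, a * b ≤ 0 → |a| ≤ |b| →
      a ^ (2 * p) + b ^ (2 * p) + (2 * p : ℕ) * a * b ^ (2 * p - 1) + (2 * p : ℕ) * a ^ (2 * p - 1) * b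
      ≤ (a + b) ^ (2 * p) := by
    intro a b hab h
    have h1 := tangent_pow p a b
    have h2 : a ^ (2 * p) + (2 * p : ℕ) * a ^ (2 * p - 1) * b ≤ 0 := by
      have e1 : 2 * p = 2 * (p - 1) + 2 := by omega
      have e2 : 2 * p - 1 = 2 * (p - 1) + 1 := by omega
      have h3 : 0 ≤ a ^ (2 * (p - 1)) := (even_two_mul _).pow_nonneg _
      have h4 : a * a ≤ -(a * b) := by
        have := mul_le_mul_of_nonneg_left h (abs_nonneg a)
        rw [abs_mul_abs_self, ← abs_mul, abs_of_nonpos hab] at this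
        exact this
      have h5 : (1 : ℝ) ≤ ((2 * p : ℕ) : ℝ) := by exact_mod_cast (by omega : 1 ≤ 2 * p)
      have h6 : a * a + (2 * p : ℕ) * (a * b) ≤ 0 := by nlinarith
      have : a ^ (2 * p) + (2 * p : ℕ) * a ^ (2 * p - 1) * b =
        a ^ (2 * (p - 1)) * (a * a + (2 * p : ℕ) * (a * b)) := by
        have e3 : a ^ (2 * p) = a ^ (2 * (p - 1)) * (a * a) := by
          rw [← pow_two, ← pow_add, ← e1]
        rw [e3, e2, pow_succ]; ring
      rw [this]
      exact mul_nonpos_of_nonneg_of_nonpos h3 h6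
    linarith
  rcases le_total (a * b) 0 with hab | hab
  · rcases le_total |a| |b| with h | h
    · exact hneg a b hab h
    · have := hneg b a (by linarith [mul_comm a b]) h
      rw [add_comm b a] at this
      refine le_trans (le_of_eq ?_) this
      ring
  · rcases mul_nonneg_iff.1 hab with ⟨ha, hb⟩ | ⟨ha, hb⟩
    · exact pow_ge_pos (2 * p) (by omega) a b ha hb
    · have := pow_ge_pos (2 * p) (by omega) (-a) (-b) (by linarith) (by linarith)
      rw [← neg_add, (even_two_mul p).neg_pow, (even_two_mul p).neg_pow, (even_two_mul p).neg_pow,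
        hodd.neg_pow, hodd.neg_pow] at this
      refine le_trans (le_of_eq ?_) this
      ring

lemma abs_pow_le_two (j : ℕ) (hj : 2 ≤ j) (x : ℝ) : |x| ^ j ≤ x ^ (2 * 1) + x ^ (2 * j) := by
  have h1 : 0 ≤ x ^ (2 * 1) := (even_two_mul _).pow_nonneg _
  have h2 : 0 ≤ x ^ (2 * j) := (even_two_mul _).pow_nonneg _
  have e : ∀ i, x ^ (2 * i) = |x| ^ (2 * i) := fun i => by rw [(even_two_mul i).pow_abs]
  rcases le_total |x| 1 with h | h
  · have := pow_le_pow_of_le_one (abs_nonneg x) h hj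
    rw [e] at h1 ⊢
    simpa using this.trans (le_add_of_nonneg_right h2)
  · have := pow_le_pow_right₀ h (by omega : j ≤ 2 * j)
    rw [e j]
    linarith

/-! ### Random variables with all moments -/

structure AllM {Ω : Type*} {mΩ : MeasurableSpace Ω} (μ : Measure Ω) (Z : Ω → ℝ) : Prop where
  meas : Measurable Z
  int : ∀ p : ℕ, Integrable (fun ω => |Z ω| ^ p) μ

namespace AllM

variable {Ω : Type*} {mΩ : MeasurableSpace Ω} {μ : Measure Ω} {Z W : Ω → ℝ}

lemma integrable (h : AllM μ Z) : Integrable Z μ := by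
  have := h.int 1
  simp only [pow_one] at this
  exact (integrable_norm_iff h.meas.aestronglyMeasurable).1 this

lemma of_le (hZ : Measurable Z) (hW : AllM μ W) (h : ∀ ω, |Z ω| ≤ |W ω|) : AllM μ Z :=
  ⟨hZ, fun p => (hW.int p).mono' (by fun_prop) (Eventually.of_forall fun ω => by
    rw [Real.norm_eq_abs, abs_of_nonneg (by positivity)]
    exact pow_le_pow_left₀ (abs_nonneg _) (h ω) p)⟩

lemma const [IsProbabilityMeasure μ] (c : ℝ) : AllM μ (fun _ => c) :=
  ⟨measurable_const, fun _ => integrable_const _⟩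

lemma abs (h : AllM μ Z) : AllM μ (fun ω => |Z ω|) :=
  of_le (by have := h.meas; fun_prop) h (fun ω => by simp)

lemma pow (h : AllM μ Z) (k : ℕ) : AllM μ (fun ω => Z ω ^ k) :=
  ⟨h.meas.pow_const k, fun p => by
    have := h.int (k * p)
    simpa only [abs_pow, ← pow_mul] using this⟩

lemma neg (h : AllM μ Z) : AllM μ (fun ω => - Z ω) :=
  of_le h.meas.neg h (fun ω => by simp)

lemma add (hZ : AllM μ Z) (hW : AllM μ W) : AllM μ (fun ω => Z ω + W ω) := by
  refine ⟨hZ.meas.add hW.meas, fun p => ?_⟩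
  refine (((hZ.int p).add (hW.int p)).const_mul (2 ^ p)).mono' ?_ (Eventually.of_forall fun ω => ?_)
  · have := hZ.meas; have := hW.meas; fun_prop
  · rw [Real.norm_eq_abs, abs_of_nonneg (by positivity)]
    have h1 : |Z ω + W ω| ≤ 2 * max |Z ω| |W ω| := by
      refine (abs_add_le _ _).trans ?_
      linarith [le_max_left |Z ω| |W ω|, le_max_right |Z ω| |W ω|]
    have h2 : max |Z ω| |W ω| ^ p ≤ |Z ω| ^ p + |W ω| ^ p := by
      rcases max_cases |Z ω| |W ω| with h | h <;> rw [h.1] <;>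
        linarith [pow_nonneg (abs_nonneg (Z ω)) p, pow_nonneg (abs_nonneg (W ω)) p]
    calc _ ≤ _ := pow_le_pow_left₀ (abs_nonneg _) h1 p
      _ = 2 ^ p * max |Z ω| |W ω| ^ p := by rw [mul_pow]
      _ ≤ _ := by
        simp only [Pi.add_apply]
        gcongr

lemma sub (hZ : AllM μ Z) (hW : AllM μ W) : AllM μ (fun ω => Z ω - W ω) := by
  simpa only [sub_eq_add_neg] using hZ.add hW.neg

lemma mul (hZ : AllM μ Z) (hW : AllM μ W) : AllM μ (fun ω => Z ω * W ω) := by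
  refine ⟨hZ.meas.mul hW.meas, fun p => ?_⟩
  refine ((hZ.int (p * 2)).add (hW.int (p * 2))).mono' ?_ (Eventually.of_forall fun ω => ?_)
  · have := hZ.meas; have := hW.meas; fun_prop
  · rw [Real.norm_eq_abs, abs_of_nonneg (by positivity), abs_mul, mul_pow]
    simp only [Pi.add_apply, pow_mul]
    nlinarith [sq_nonneg (|Z ω| ^ p - |W ω| ^ p), pow_nonneg (abs_nonneg (Z ω)) p, pow_nonneg (abs_nonneg (W ω)) p]

lemma sum [IsProbabilityMeasure μ] {ι : Type*} (S : Finset ι) {Z : ι → Ω → ℝ} (h : ∀ i, AllM μ (Z i)) :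
    AllM μ (fun ω => ∑ i ∈ S, Z i ω) := by
  classical
  induction S using Finset.induction_on with
  | empty => simpa using AllM.const (μ := μ) 0
  | insert i S hi ih =>
    simp only [Finset.sum_insert hi]
    exact (h i).add ih

lemma sub_const [IsProbabilityMeasure μ] (h : AllM μ Z) (c : ℝ) : AllM μ (fun ω => Z ω - c) :=
  h.sub (AllM.const c)

lemma indicator (h : AllM μ Z) {A : Set Ω} (hA : MeasurableSet A) : AllM μ (A.indicator Z) :=
  of_le (h.meas.indicator hA) h fun ω => by
    by_cases hω : ω ∈ A
    · simp [Set.indicator_of_mem hω]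
    · simp [Set.indicator_of_notMem hω]

lemma memLp_two (h : AllM μ Z) : MemLp Z 2 μ := by
  rw [memLp_two_iff_integrable_sq h.meas.aestronglyMeasurable]
  exact (h.pow 2).integrable

end AllM

/-- Cauchy-Schwarz. -/
lemma integral_abs_mul_le {Ω : Type*} {mΩ : MeasurableSpace Ω} {μ : Measure Ω} {Z W : Ω → ℝ}
    (hZ : MemLp Z 2 μ) (hW : MemLp W 2 μ) :
    ∫ ω, |Z ω * W ω| ∂μ ≤ √(∫ ω, Z ω ^ 2 ∂μ) * √(∫ ω, W ω ^ 2 ∂μ) := by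
  have h := integral_mul_le_Lp_mul_Lq_of_nonneg (μ := μ) (p := 2) (q := 2) Real.HolderConjugate.two_two
    (f := fun ω => |Z ω|) (g := fun ω => |W ω|) (Eventually.of_forall fun _ => abs_nonneg _)
    (Eventually.of_forall fun _ => abs_nonneg _) (by rw [ENNReal.ofReal_ofNat]; exact hZ.abs) (by rw [ENNReal.ofReal_ofNat]; exact hW.abs)
  simp only [Real.sqrt_eq_rpow, abs_mul]
  simpa [sq_abs] using h

/-! ### Additive processes -/

structure AP {Ω : Type*} {mΩ : MeasurableSpace Ω} (μ : Measure Ω)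
    (X : ℝ≥0 → Ω → ℝ) (hXmeas : ∀ t, StronglyMeasurable (X t)) (F : ℕ → ℝ≥0 → ℝ) : Prop where
  hX0 : ∀ ω, X 0 ω = 0
  hindep : ∀ s t : ℝ≥0, s ≤ t →
      Indep (MeasurableSpace.comap (fun ω => X t ω - X s ω) (inferInstance : MeasurableSpace ℝ))
        (MeasureTheory.Filtration.natural X hXmeas s) μ
  hcontP : ∀ (t : ℝ≥0) (ε : ℝ), 0 < ε →
      Tendsto (fun s => μ {ω | ε ≤ |X s ω - X t ω|}) (𝓝 t) (𝓝 0)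
  hcadlag : ∀ ω, IsCadlag fun t => X t ω
  hmom : ∀ (n : ℕ) (t : ℝ≥0), Integrable (fun ω => |X t ω| ^ n) μ
  hcent : ∀ t : ℝ≥0, ∫ ω, X t ω ∂μ = 0
  hF : ∀ n, 2 ≤ n → ∀ t : ℝ≥0,
      ∫ ω, X t ω ^ n ∂μ = kendall n fun k => if k = 1 then 0 else F k t

namespace AP

variable {Ω : Type*} {mΩ : MeasurableSpace Ω} {μ : Measure Ω} [IsProbabilityMeasure μ]
    {X : ℝ≥0 → Ω → ℝ} {hXmeas : ∀ t, StronglyMeasurable (X t)} {F : ℕ → ℝ≥0 → ℝ}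

lemma allM (h : AP μ X hXmeas F) (t : ℝ≥0) : AllM μ (X t) := ⟨(hXmeas t).measurable, fun p => h.hmom p t⟩

lemma allM_sub (h : AP μ X hXmeas F) (s t : ℝ≥0) : AllM μ (fun ω => X t ω - X s ω) :=
  (h.allM t).sub (h.allM s)

lemma indep_mul (h : AP μ X hXmeas F) {s t : ℝ≥0} (hst : s ≤ t) {U : Ω → ℝ}
    (hU : Measurable[Filtration.natural X hXmeas s] U) {g : ℝ → ℝ} (hg : Measurable g) :
    ∫ ω, U ω * g (X t ω - X s ω) ∂μ = (∫ ω, U ω ∂μ) * ∫ ω, g (X t ω - X s ω) ∂μ := by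
  have hi : IndepFun U (fun ω => g (X t ω - X s ω)) μ := by
    rw [IndepFun_iff_Indep]
    refine indep_of_indep_of_le_left (indep_of_indep_of_le_right (h.hindep s t hst).symm ?_) hU.comap_le
    have : (fun ω => g (X t ω - X s ω)) = g ∘ (fun ω => X t ω - X s ω) := rfl
    rw [this, ← MeasurableSpace.comap_comp]
    exact MeasurableSpace.comap_mono hg.comap_le
  refine hi.integral_fun_mul_eq_mul_integral ?_ ?_
  · exact (hU.mono ((Filtration.natural X hXmeas).le s) le_rfl).aestronglyMeasurable
  · exact (hg.comp (h.allM_sub s t).meas).aestronglyMeasurable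

lemma adapted (hXmeas : ∀ t, StronglyMeasurable (X t)) {s t : ℝ≥0} (hst : s ≤ t) :
    Measurable[Filtration.natural X hXmeas t] (X s) := by
  have h1 : Measurable[MeasurableSpace.comap (X s) inferInstance] (X s) := comap_measurable _
  refine h1.mono ?_ le_rfl
  exact le_iSup₂_of_le s hst (le_of_eq (by rfl))

/-- moments of increments in terms of cumulants -/
noncomputable def cum (F : ℕ → ℝ≥0 → ℝ) (t : ℝ≥0) (k : ℕ) : ℝ := if k = 1 then 0 else F k t

lemma moment_eq (h : AP μ X hXmeas F) (n : ℕ) (t : ℝ≥0) :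
    ∫ ω, X t ω ^ n ∂μ = kendall n (cum F t) := by
  rcases n with _ | _ | n
  · simp [kendall_zero]
  · simp [kendall_succ, kendall_zero, cum, h.hcent]
  · exact h.hF _ (by omega) t

lemma binom (h : AP μ X hXmeas F) {s t : ℝ≥0} (hst : s ≤ t) (n : ℕ) :
    ∫ ω, X t ω ^ n ∂μ = ∑ j ∈ Finset.range (n + 1),
      (n.choose j : ℝ) * (∫ ω, X s ω ^ j ∂μ) * ∫ ω, (X t ω - X s ω) ^ (n - j) ∂μ := by
  have : ∀ ω, X t ω ^ n = ∑ j ∈ Finset.range (n + 1),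
      (n.choose j : ℝ) * (X s ω ^ j * (X t ω - X s ω) ^ (n - j)) := by
    intro ω
    have := add_pow (X s ω) (X t ω - X s ω) n
    rw [add_sub_cancel] at this
    rw [this]
    exact Finset.sum_congr rfl fun j _ => by ring
  simp only [this]
  rw [integral_finsetSum]
  · refine Finset.sum_congr rfl fun j _ => ?_
    rw [integral_const_mul, h.indep_mul hst ((adapted hXmeas le_rfl).pow_const j)
      (g := fun x => x ^ (n - j)) (by fun_prop), mul_assoc]
  · intro j _
    exact (((h.allM s).pow j).mul ((h.allM_sub s t).pow (n - j))).integrable.const_mul _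

lemma moment_incr (h : AP μ X hXmeas F) {s t : ℝ≥0} (hst : s ≤ t) (n : ℕ) :
    ∫ ω, (X t ω - X s ω) ^ n ∂μ = kendall n (fun k => cum F t k - cum F s k) := by
  induction n using Nat.strong_induction_on with
  | _ n ih =>
    have h1 := h.binom hst n
    have h2 := kendall_add (cum F s) (fun k => cum F t k - cum F s k) n
    simp only [add_sub_cancel] at h2
    rw [h.moment_eq] at h1
    rw [show (fun k => cum F t k) = cum F t from rfl, h1, Finset.sum_range_succ', Finset.sum_range_succ'] at h2
    have h3 : ∀ j ∈ Finset.range n, (n.choose (j + 1) : ℝ) * (∫ ω, X s ω ^ (j + 1) ∂μ) *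
        ∫ ω, (X t ω - X s ω) ^ (n - (j + 1)) ∂μ = (n.choose (j + 1) : ℝ) * kendall (j + 1) (cum F s) *
        kendall (n - (j + 1)) (fun k => cum F t k - cum F s k) := by
      intro j hj
      have := Finset.mem_range.1 hj
      rw [ih (n - (j + 1)) (by omega), h.moment_eq]
    rw [Finset.sum_congr rfl h3] at h2
    simpa [kendall_zero] using h2

lemma mean_incr (h : AP μ X hXmeas F) (s t : ℝ≥0) : ∫ ω, (X t ω - X s ω) ∂μ = 0 := by
  rw [integral_sub (h.allM t).integrable (h.allM s).integrable, h.hcent, h.hcent, sub_zero]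

lemma superadd (h : AP μ X hXmeas F) {s t : ℝ≥0} (hst : s ≤ t) (p : ℕ) (hp : 1 ≤ p) :
    ∫ ω, (X t ω - X s ω) ^ (2 * p) ∂μ ≤ ∫ ω, X t ω ^ (2 * p) ∂μ - ∫ ω, X s ω ^ (2 * p) ∂μ := by
  rcases hp.eq_or_lt with rfl | hp
  · have := h.binom hst 2
    simp only [Finset.sum_range_succ, Finset.sum_range_zero] at this
    simp [h.hcent] at this
    simp only [mul_one]
    linarith
  · have hA := h.allM s
    have hD := h.allM_sub s t
    have hi1 := (hA.pow (2 * p)).integrable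
    have hi2 := (hD.pow (2 * p)).integrable
    have hi3 := ((hA.mul (hD.pow (2 * p - 1))).integrable).const_mul ((2 * p : ℕ) : ℝ)
    have hi4 := (((hA.pow (2 * p - 1)).mul hD).integrable).const_mul ((2 * p : ℕ) : ℝ)
    have hi12 : Integrable (fun ω => X s ω ^ (2 * p) + (X t ω - X s ω) ^ (2 * p)) μ := hi1.add hi2
    have hi123 : Integrable (fun ω => X s ω ^ (2 * p) + (X t ω - X s ω) ^ (2 * p) +
      (2 * p : ℕ) * (X s ω * (X t ω - X s ω) ^ (2 * p - 1))) μ := hi12.add hi3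
    have hle : ∫ ω, (X s ω ^ (2 * p) + (X t ω - X s ω) ^ (2 * p) +
        (2 * p : ℕ) * (X s ω * (X t ω - X s ω) ^ (2 * p - 1)) +
        (2 * p : ℕ) * (X s ω ^ (2 * p - 1) * (X t ω - X s ω))) ∂μ ≤ ∫ ω, X t ω ^ (2 * p) ∂μ := by
      refine integral_mono (((hi1.add hi2).add hi3).add hi4) ((h.allM t).pow (2 * p)).integrable fun ω => ?_
      have := pow_superadd p hp (X s ω) (X t ω - X s ω)
      rw [add_sub_cancel] at this
      refine le_trans (le_of_eq ?_) this
      ring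
    rw [integral_add hi123 hi4, integral_add hi12 hi3, integral_add hi1 hi2,
      integral_const_mul, integral_const_mul,
      h.indep_mul hst (adapted hXmeas le_rfl) (g := fun x => x ^ (2 * p - 1)) (by fun_prop),
      h.indep_mul hst ((adapted hXmeas le_rfl).pow_const _) (g := fun x => x) (by fun_prop),
      h.mean_incr, h.hcent] at hle
    linarith

lemma even_nonneg (p : ℕ) (Z : Ω → ℝ) : 0 ≤ ∫ ω, Z ω ^ (2 * p) ∂μ :=
  integral_nonneg fun _ => (even_two_mul p).pow_nonneg _

lemma even_mono (h : AP μ X hXmeas F) {s t : ℝ≥0} (hst : s ≤ t) (p : ℕ) (hp : 1 ≤ p) :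
    ∫ ω, X s ω ^ (2 * p) ∂μ ≤ ∫ ω, X t ω ^ (2 * p) ∂μ := by
  have := h.superadd hst p hp
  have h2 := even_nonneg (μ := μ) p (fun ω => X t ω - X s ω)
  linarith

lemma even_incr_le (h : AP μ X hXmeas F) {s t : ℝ≥0} (hst : s ≤ t) (p : ℕ) (hp : 1 ≤ p) :
    ∫ ω, (X t ω - X s ω) ^ (2 * p) ∂μ ≤ ∫ ω, X t ω ^ (2 * p) ∂μ := by
  have := h.superadd hst p hp
  have h2 := even_nonneg (μ := μ) p (X s)
  linarith

/-- Increment over the partition. -/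
noncomputable def dd (X : ℝ≥0 → Ω → ℝ) (s t : ℝ≥0) (N k : ℕ) (ω : Ω) : ℝ :=
  X (pt s t N (k + 1)) ω - X (pt s t N k) ω

lemma allM_dd (h : AP μ X hXmeas F) (s t : ℝ≥0) (N k : ℕ) : AllM μ (dd X s t N k) :=
  h.allM_sub _ _

noncomputable def CC (μ : Measure Ω) (X : ℝ≥0 → Ω → ℝ) (t : ℝ≥0) (j : ℕ) : ℝ :=
  ∫ ω, X t ω ^ (2 * 1) ∂μ + ∫ ω, X t ω ^ (2 * j) ∂μ

lemma sum_even_le (h : AP μ X hXmeas F) {s t : ℝ≥0} (hst : s ≤ t) (N p : ℕ) (hp : 1 ≤ p) :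
    ∑ k ∈ Finset.range (N + 1), ∫ ω, dd X s t N k ω ^ (2 * p) ∂μ ≤ ∫ ω, X t ω ^ (2 * p) ∂μ := by
  refine (Finset.sum_le_sum fun k _ => h.superadd (pt_mono s t N (Nat.le_succ k)) p hp).trans ?_
  rw [Finset.sum_range_sub (fun k => ∫ ω, X (pt s t N k) ω ^ (2 * p) ∂μ), pt_last hst]
  linarith [even_nonneg (μ := μ) p (X (pt s t N 0))]

lemma sum_abs_le (h : AP μ X hXmeas F) {s t : ℝ≥0} (hst : s ≤ t) (N j : ℕ) (hj : 2 ≤ j) :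
    ∑ k ∈ Finset.range (N + 1), ∫ ω, |dd X s t N k ω| ^ j ∂μ ≤ CC μ X t j := by
  have h1 := h.sum_even_le hst N 1 le_rfl
  have h2 := h.sum_even_le hst N j (by omega)
  unfold CC
  refine le_trans ?_ (add_le_add h1 h2)
  rw [← Finset.sum_add_distrib]
  refine Finset.sum_le_sum fun k _ => ?_
  have hd := h.allM_dd s t N k
  rw [← integral_add (hd.pow _).integrable (hd.pow _).integrable]
  exact integral_mono (hd.int j) ((hd.pow _).integrable.add (hd.pow _).integrable)
    fun ω => abs_pow_le_two j hj _

end AP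

namespace AP

variable {Ω : Type*} {mΩ : MeasurableSpace Ω} {μ : Measure Ω} [IsProbabilityMeasure μ]
    {X : ℝ≥0 → Ω → ℝ} {hXmeas : ∀ t, StronglyMeasurable (X t)} {F : ℕ → ℝ≥0 → ℝ}

lemma trunc_bound {D : Ω → ℝ} (hD : AllM μ D) (j : ℕ) {η : ℝ} (hη : 0 ≤ η) :
    ∫ ω, |D ω| ^ j ∂μ ≤ η ^ j + √(∫ ω, D ω ^ (2 * j) ∂μ) * √(μ.real {ω | η ≤ |D ω|}) := by
  have hA : MeasurableSet {ω | η ≤ |D ω|} := measurableSet_le measurable_const hD.meas.abs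
  set W : Ω → ℝ := Set.indicator {ω | η ≤ |D ω|} (fun _ => 1) with hW
  have hWM : AllM μ W := (AllM.const 1).indicator hA
  have hcs := integral_abs_mul_le (hD.pow j).memLp_two hWM.memLp_two
  have h1 : ∫ ω, W ω ^ 2 ∂μ = μ.real {ω | η ≤ |D ω|} := by
    have : ∀ ω, W ω ^ 2 = Set.indicator {ω | η ≤ |D ω|} (fun _ => (1 : ℝ)) ω := by
      intro ω
      by_cases hω : ω ∈ {ω | η ≤ |D ω|}
      · simp only [hW, Set.indicator_of_mem hω, one_pow]
      · simp only [hW, Set.indicator_of_notMem hω]; norm_num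
    simp only [this]
    rw [integral_indicator hA]
    simp
  have h2 : ∀ ω, (D ω ^ j) ^ 2 = D ω ^ (2 * j) := fun ω => by rw [← pow_mul, mul_comm]
  simp only [h1, h2] at hcs
  refine le_trans ?_ (add_le_add_right hcs _)
  have hDWi : Integrable (fun ω => |D ω ^ j * W ω|) μ := ((hD.pow j).mul hWM).abs.integrable
  have h3 : ∫ ω, (η ^ j + |D ω ^ j * W ω|) ∂μ = η ^ j + ∫ ω, |D ω ^ j * W ω| ∂μ := by
    rw [integral_add (integrable_const _) hDWi]; simp
  rw [← h3]
  refine integral_mono (hD.int j) ((integrable_const _).add hDWi) fun ω => ?_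
  by_cases hω : ω ∈ {ω | η ≤ |D ω|}
  · simp only [hW, Set.indicator_of_mem hω, mul_one, abs_pow]
    linarith [pow_nonneg hη j]
  · simp only [hW, Set.indicator_of_notMem hω, mul_zero, abs_zero, add_zero]
    have : |D ω| < η := not_le.1 hω
    exact pow_le_pow_left₀ (abs_nonneg _) this.le j

lemma mom_tendsto_zero (h : AP μ X hXmeas F) (t : ℝ≥0) (j : ℕ) (hj : 1 ≤ j) :
    Tendsto (fun r => ∫ ω, |X r ω - X t ω| ^ j ∂μ) (𝓝 t) (𝓝 0) := by
  set K := ∫ ω, X (t + 1) ω ^ (2 * j) ∂μ with hK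
  have hbound : ∀ r ≤ t + 1, ∫ ω, (X r ω - X t ω) ^ (2 * j) ∂μ ≤ K := by
    intro r hr
    rcases le_total t r with h1 | h1
    · exact (h.even_incr_le h1 j hj).trans (h.even_mono hr j hj)
    · have : ∀ ω, (X r ω - X t ω) ^ (2 * j) = (X t ω - X r ω) ^ (2 * j) := fun ω => by
        rw [← neg_sub, (even_two_mul j).neg_pow]
      simp only [this]
      exact (h.even_incr_le h1 j hj).trans (h.even_mono (by simp) j hj)
  rw [Metric.tendsto_nhds]
  intro ε hε
  set η := min (ε / 2) 1 with hη
  have hη0 : 0 < η := lt_min (by linarith) one_pos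
  have hηj : η ^ j ≤ ε / 2 := by
    calc η ^ j ≤ η ^ 1 := pow_le_pow_of_le_one hη0.le (min_le_right _ _) hj
      _ ≤ _ := by rw [pow_one]; exact min_le_left _ _
  have hlim : Tendsto (fun r => √K * √(μ.real {ω | η ≤ |X r ω - X t ω|})) (𝓝 t) (𝓝 0) := by
    have h1 : Tendsto (fun r => μ.real {ω | η ≤ |X r ω - X t ω|}) (𝓝 t) (𝓝 0) := by
      have := (ENNReal.tendsto_toReal ENNReal.zero_ne_top).comp (h.hcontP t η hη0)
      simpa [Measure.real, Function.comp_def] using this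
    have := (h1.sqrt).const_mul (√K)
    simpa using this
  have hev : ∀ᶠ r in 𝓝 t, r ≤ t + 1 := by
    refine Filter.Eventually.mono (gt_mem_nhds (show t < t + 1 by simp)) fun r hr => hr.le
  filter_upwards [hlim.eventually (gt_mem_nhds (half_pos hε)), hev] with r h1 h2
  rw [Real.dist_eq, sub_zero, abs_of_nonneg (integral_nonneg fun _ => by positivity)]
  have h3 := trunc_bound (h.allM_sub t r) j hη0.le
  have h4 : √(∫ ω, (X r ω - X t ω) ^ (2 * j) ∂μ) * √(μ.real {ω | η ≤ |X r ω - X t ω|}) ≤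
      √K * √(μ.real {ω | η ≤ |X r ω - X t ω|}) := by
    gcongr
    exact hbound r h2
  linarith

lemma moment_rec (h : AP μ X hXmeas F) {s t : ℝ≥0} (hst : s ≤ t) (m : ℕ) :
    ∫ ω, (X t ω - X s ω) ^ (m + 1) ∂μ - (cum F t (m + 1) - cum F s (m + 1)) =
      ∑ i ∈ Finset.range m, (m.choose (i + 1) : ℝ) * (∫ ω, (X t ω - X s ω) ^ (i + 1) ∂μ) *
        (cum F t (m - i) - cum F s (m - i)) := by
  rw [h.moment_incr hst, kendall_succ, Finset.sum_range_succ']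
  simp only [kendall_zero, h.moment_incr hst]
  simp

lemma abs_moment_le (h : AP μ X hXmeas F) (s t : ℝ≥0) (j : ℕ) :
    |∫ ω, (X t ω - X s ω) ^ j ∂μ| ≤ ∫ ω, |X t ω - X s ω| ^ j ∂μ := by
  refine (abs_integral_le_integral_abs).trans (le_of_eq ?_)
  simp only [abs_pow]

lemma cum_bound (h : AP μ X hXmeas F) (s t : ℝ≥0) (m : ℕ) :
    |cum F t (m + 1) - cum F s (m + 1)| ≤ ∫ ω, |X t ω - X s ω| ^ (m + 1) ∂μ +
      ∑ i ∈ Finset.range m, (m.choose (i + 1) : ℝ) * (∫ ω, |X t ω - X s ω| ^ (i + 1) ∂μ) *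
        |cum F t (m - i) - cum F s (m - i)| := by
  wlog hst : s ≤ t generalizing s t
  · have := this t s (le_of_not_ge hst)
    simpa only [abs_sub_comm] using this
  have h1 := h.moment_rec hst m
  have h2 : cum F t (m + 1) - cum F s (m + 1) = ∫ ω, (X t ω - X s ω) ^ (m + 1) ∂μ -
      ∑ i ∈ Finset.range m, (m.choose (i + 1) : ℝ) * (∫ ω, (X t ω - X s ω) ^ (i + 1) ∂μ) *
        (cum F t (m - i) - cum F s (m - i)) := by rw [← h1]; ring
  rw [h2]
  refine (abs_sub _ _).trans (add_le_add (h.abs_moment_le s t _) ?_)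
  refine (Finset.abs_sum_le_sum_abs _ _).trans (Finset.sum_le_sum fun i _ => ?_)
  rw [abs_mul, abs_mul, Nat.abs_cast]
  gcongr
  exact h.abs_moment_le s t _

lemma cum_continuous (h : AP μ X hXmeas F) (j : ℕ) (hj : 1 ≤ j) : Continuous (fun t => cum F t j) := by
  induction j using Nat.strong_induction_on with
  | _ j ih =>
    obtain ⟨m, rfl⟩ : ∃ m, j = m + 1 := ⟨j - 1, by omega⟩
    rw [continuous_iff_continuousAt]
    intro t
    rw [ContinuousAt, tendsto_iff_norm_sub_tendsto_zero]
    refine squeeze_zero (fun _ => norm_nonneg _) (fun r => h.cum_bound t r m) ?_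
    rw [← add_zero (0 : ℝ)]
    refine (h.mom_tendsto_zero t (m + 1) hj).add ?_
    rw [show (0 : ℝ) = ∑ i ∈ Finset.range m, (m.choose (i + 1) : ℝ) * 0 * 0 by simp]
    refine tendsto_finsetSum _ fun i hi => ?_
    have hi' := Finset.mem_range.1 hi
    refine ((h.mom_tendsto_zero t (i + 1) (by omega)).const_mul _).mul ?_
    have := (ih (m - i) (by omega) (by omega)).tendsto t
    rw [tendsto_iff_norm_sub_tendsto_zero] at this
    exact this

/-- increments of cumulants over the partition -/
noncomputable def yy (F : ℕ → ℝ≥0 → ℝ) (s t : ℝ≥0) (N k j : ℕ) : ℝ :=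
  cum F (pt s t N (k + 1)) j - cum F (pt s t N k) j

lemma yy_small (h : AP μ X hXmeas F) {s t : ℝ≥0} (hst : s ≤ t) (j : ℕ) (hj : 1 ≤ j) {ε : ℝ} (hε : 0 < ε) :
    ∀ᶠ N in atTop, ∀ k < N + 1, |yy F s t N k j| ≤ ε := by
  have huc := (isCompact_Icc (a := (0 : ℝ≥0)) (b := t)).uniformContinuousOn_of_continuous
    (h.cum_continuous j hj).continuousOn
  rw [Metric.uniformContinuousOn_iff] at huc
  obtain ⟨δ, hδ, hd⟩ := huc ε hε
  filter_upwards [pt_mesh s t hδ] with N hN k hk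
  have := hd (pt s t N k) ⟨zero_le, pt_le hst hk.le⟩ (pt s t N (k + 1)) ⟨zero_le, pt_le hst hk⟩ (hN k)
  rw [dist_comm, Real.dist_eq] at this
  exact this.le

lemma CC_nonneg (t : ℝ≥0) (j : ℕ) : 0 ≤ CC μ X t j :=
  add_nonneg (even_nonneg 1 (X t)) (even_nonneg j (X t))

lemma sum_moment_err (h : AP μ X hXmeas F) {s t : ℝ≥0} (hst : s ≤ t) (m : ℕ) {ε : ℝ} (hε : 0 < ε) :
    ∀ᶠ N in atTop, ∑ k ∈ Finset.range (N + 1),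
      |∫ ω, dd X s t N k ω ^ (m + 1) ∂μ - yy F s t N k (m + 1)| ≤ ε := by
  set K := ∑ i ∈ Finset.range m, (m.choose (i + 1) : ℝ) * CC μ X t (i + 1) with hK
  have hK0 : 0 ≤ K := Finset.sum_nonneg fun i _ => mul_nonneg (by positivity) (CC_nonneg _ _)
  have hη : 0 < ε / (K + 1) := by positivity
  set η := ε / (K + 1)
  have hev : ∀ᶠ N in atTop, ∀ i ∈ Finset.range m, ∀ k < N + 1, |yy F s t N k (m - i)| ≤ η := by
    rw [Filter.eventually_all_finset]
    intro i hi
    have := Finset.mem_range.1 hi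
    exact h.yy_small hst _ (by omega) hη
  filter_upwards [hev] with N hN
  have h1 : ∀ k ∈ Finset.range (N + 1), |∫ ω, dd X s t N k ω ^ (m + 1) ∂μ - yy F s t N k (m + 1)| ≤
      ∑ i ∈ Finset.range m, (m.choose (i + 1) : ℝ) * |∫ ω, dd X s t N k ω ^ (i + 1) ∂μ| * η := by
    intro k hk
    have := h.moment_rec (pt_mono s t N (Nat.le_succ k)) m
    unfold dd yy at *
    rw [this]
    refine (Finset.abs_sum_le_sum_abs _ _).trans (Finset.sum_le_sum fun i hi => ?_)
    rw [abs_mul, abs_mul, Nat.abs_cast]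
    gcongr
    exact hN i hi k (Finset.mem_range.1 hk)
  refine (Finset.sum_le_sum h1).trans ?_
  rw [Finset.sum_comm]
  have h2 : ∀ i ∈ Finset.range m, ∑ k ∈ Finset.range (N + 1),
      (m.choose (i + 1) : ℝ) * |∫ ω, dd X s t N k ω ^ (i + 1) ∂μ| * η ≤
      (m.choose (i + 1) : ℝ) * CC μ X t (i + 1) * η := by
    intro i _
    rw [← Finset.sum_mul, ← Finset.mul_sum]
    gcongr
    rcases Nat.eq_zero_or_pos i with rfl | hi
    · have : ∀ k, ∫ ω, dd X s t N k ω ^ (0 + 1) ∂μ = 0 := fun k => by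
        simp only [zero_add, pow_one]
        exact h.mean_incr _ _
      simp only [this, abs_zero, Finset.sum_const_zero]
      exact CC_nonneg _ _
    · exact (Finset.sum_le_sum fun k _ => h.abs_moment_le _ _ _).trans (h.sum_abs_le hst N (i + 1) (by omega))
  refine (Finset.sum_le_sum h2).trans ?_
  rw [← Finset.sum_mul, ← hK]
  have : (K + 1) * η = ε := by
    simp only [η]; field_simp
  nlinarith

lemma tendsto_sum_moment (h : AP μ X hXmeas F) {s t : ℝ≥0} (hst : s ≤ t) (m : ℕ) :
    Tendsto (fun N => ∑ k ∈ Finset.range (N + 1), ∫ ω, dd X s t N k ω ^ (m + 1) ∂μ) atTop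
      (𝓝 (cum F t (m + 1) - cum F s (m + 1))) := by
  rw [Metric.tendsto_nhds]
  intro ε hε
  filter_upwards [h.sum_moment_err hst m (half_pos hε)] with N hN
  have hy : cum F t (m + 1) - cum F s (m + 1) = ∑ k ∈ Finset.range (N + 1), yy F s t N k (m + 1) := by
    unfold yy
    rw [Finset.sum_range_sub (fun k => cum F (pt s t N k) (m + 1)), pt_last hst, pt_zero]
  rw [Real.dist_eq, hy, ← Finset.sum_sub_distrib]
  refine lt_of_le_of_lt ((Finset.abs_sum_le_sum_abs _ _).trans hN) (by linarith)

lemma tendsto_sum_sq (h : AP μ X hXmeas F) {s t : ℝ≥0} (hst : s ≤ t) (m : ℕ) (hm : 1 ≤ m) :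
    Tendsto (fun N => ∑ k ∈ Finset.range (N + 1), (∫ ω, dd X s t N k ω ^ (m + 1) ∂μ) ^ 2) atTop
      (𝓝 0) := by
  rw [Metric.tendsto_nhds]
  intro ε hε
  have hC := CC_nonneg (μ := μ) (X := X) t (m + 1)
  have hη : 0 < ε / (CC μ X t (m + 1) + 1) / 2 := by positivity
  set η := ε / (CC μ X t (m + 1) + 1) / 2
  filter_upwards [h.sum_moment_err hst m (half_pos hη), h.yy_small hst (m + 1) (by omega) (half_pos hη)]
    with N h1 h2
  rw [Real.dist_eq, sub_zero, abs_of_nonneg (Finset.sum_nonneg fun _ _ => sq_nonneg _)]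
  have h3 : ∀ k ∈ Finset.range (N + 1), |∫ ω, dd X s t N k ω ^ (m + 1) ∂μ| ≤ η := by
    intro k hk
    have h4 := h2 k (Finset.mem_range.1 hk)
    have h5 := (Finset.single_le_sum (f := fun k => |∫ ω, dd X s t N k ω ^ (m + 1) ∂μ - yy F s t N k (m + 1)|)
      (fun _ _ => abs_nonneg _) hk).trans h1
    have h6 := abs_sub_abs_le_abs_sub (∫ ω, dd X s t N k ω ^ (m + 1) ∂μ) (yy F s t N k (m + 1))
    linarith
  have h7 : ∑ k ∈ Finset.range (N + 1), (∫ ω, dd X s t N k ω ^ (m + 1) ∂μ) ^ 2 ≤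
      ∑ k ∈ Finset.range (N + 1), η * ∫ ω, |dd X s t N k ω| ^ (m + 1) ∂μ := by
    refine Finset.sum_le_sum fun k hk => ?_
    rw [← sq_abs, sq]
    exact mul_le_mul (h3 k hk) (h.abs_moment_le _ _ _) (abs_nonneg _) hη.le
  refine lt_of_le_of_lt h7 ?_
  rw [← Finset.mul_sum]
  have h8 := h.sum_abs_le hst N (m + 1) (by omega)
  have h9 : (CC μ X t (m + 1) + 1) * η = ε / 2 := by
    simp only [η]; field_simp
  nlinarith

/-- product majorant -/
noncomputable def PP (X : ℝ≥0 → Ω → ℝ) (s t : ℝ≥0) (N j k : ℕ) (ω : Ω) : ℝ :=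
  ∏ i ∈ Finset.range k, (1 + |dd X s t N i ω| ^ j)

lemma dd_meas (hXmeas : ∀ t, StronglyMeasurable (X t)) (s t : ℝ≥0) {N i k : ℕ} (hik : i < k) :
    Measurable[Filtration.natural X hXmeas (pt s t N k)] (dd X s t N i) := by
  have h1 := adapted hXmeas (pt_mono s t N (Nat.succ_le_of_lt hik))
  have h2 := adapted hXmeas (pt_mono s t N hik.le)
  exact h1.sub h2

lemma PP_meas (hXmeas : ∀ t, StronglyMeasurable (X t)) (s t : ℝ≥0) (N j k : ℕ) :
    Measurable[Filtration.natural X hXmeas (pt s t N k)] (PP X s t N j k) := by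
  unfold PP
  refine Finset.measurable_fun_prod _ fun i hi => ?_
  exact (show Measurable (fun x : ℝ => 1 + |x| ^ j) by fun_prop).comp
    (dd_meas hXmeas s t (N := N) (Finset.mem_range.1 hi))

lemma PP_allM (h : AP μ X hXmeas F) (s t : ℝ≥0) (N j k : ℕ) : AllM μ (PP X s t N j k) := by
  unfold PP
  induction k with
  | zero => simpa using AllM.const (μ := μ) 1
  | succ k ih =>
    simp only [Finset.prod_range_succ]
    exact ih.mul ((AllM.const 1).add ((h.allM_dd s t N k).abs.pow j))

lemma PP_step (h : AP μ X hXmeas F) (s t : ℝ≥0) (N j k p : ℕ) :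
    ∫ ω, PP X s t N j (k + 1) ω ^ p ∂μ =
      (∫ ω, PP X s t N j k ω ^ p ∂μ) * ∫ ω, (1 + |dd X s t N k ω| ^ j) ^ p ∂μ := by
  have h1 := h.indep_mul (pt_mono s t N (Nat.le_succ k)) (U := fun ω => PP X s t N j k ω ^ p)
    ((PP_meas hXmeas s t N j k).pow_const p) (g := fun x => (1 + |x| ^ j) ^ p) (by fun_prop)
  unfold dd
  rw [← h1]
  congr 1
  ext ω
  unfold PP
  rw [Finset.prod_range_succ, mul_pow]
  rfl

lemma one_add_moment (h : AP μ X hXmeas F) (s t : ℝ≥0) (N j k p : ℕ) :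
    ∫ ω, (1 + |dd X s t N k ω| ^ j) ^ p ∂μ =
      1 + ∑ i ∈ Finset.range p, (p.choose (i + 1) : ℝ) * ∫ ω, |dd X s t N k ω| ^ (j * (i + 1)) ∂μ := by
  have hd := h.allM_dd s t N k
  have : ∀ ω, (1 + |dd X s t N k ω| ^ j) ^ p =
      ∑ i ∈ Finset.range (p + 1), (p.choose i : ℝ) * |dd X s t N k ω| ^ (j * i) := by
    intro ω
    rw [add_comm, add_pow]
    refine Finset.sum_congr rfl fun i _ => ?_
    rw [one_pow, ← pow_mul]; ring
  simp only [this]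
  rw [integral_finsetSum _ fun i _ => (hd.int _).const_mul _]
  simp only [integral_const_mul]
  rw [Finset.sum_range_succ', add_comm]
  simp

noncomputable def BB (μ : Measure Ω) (X : ℝ≥0 → Ω → ℝ) (t : ℝ≥0) (j p : ℕ) : ℝ :=
  Real.exp (∑ i ∈ Finset.range p, (p.choose (i + 1) : ℝ) * CC μ X t (j * (i + 1)))

lemma PP_bound (h : AP μ X hXmeas F) {s t : ℝ≥0} (hst : s ≤ t) (N j p : ℕ) (hj : 2 ≤ j) :
    ∫ ω, PP X s t N j (N + 1) ω ^ p ∂μ ≤ BB μ X t j p := by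
  have key : ∀ M, ∫ ω, PP X s t N j M ω ^ p ∂μ ≤ Real.exp (∑ k ∈ Finset.range M,
      ∑ i ∈ Finset.range p, (p.choose (i + 1) : ℝ) * ∫ ω, |dd X s t N k ω| ^ (j * (i + 1)) ∂μ) := by
    intro M
    induction M with
    | zero => simp [PP]
    | succ M ih =>
      rw [h.PP_step, Finset.sum_range_succ, Real.exp_add]
      refine mul_le_mul ih ?_ (integral_nonneg fun ω => by positivity) (Real.exp_pos _).le
      rw [h.one_add_moment, add_comm]
      exact Real.add_one_le_exp _
  refine (key (N + 1)).trans (Real.exp_le_exp.2 ?_)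
  rw [Finset.sum_comm]
  refine Finset.sum_le_sum fun i _ => ?_
  rw [← Finset.mul_sum]
  gcongr
  exact h.sum_abs_le hst N _ (by nlinarith [Nat.zero_le (j * i)])

/-- sums of absolute powers -/
noncomputable def TT (X : ℝ≥0 → Ω → ℝ) (s t : ℝ≥0) (N j : ℕ) (ω : Ω) : ℝ :=
  ∑ k ∈ Finset.range (N + 1), |dd X s t N k ω| ^ j

lemma TT_nonneg (s t : ℝ≥0) (N j : ℕ) (ω : Ω) : 0 ≤ TT X s t N j ω :=
  Finset.sum_nonneg fun _ _ => by positivity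

lemma TT_le_PP (s t : ℝ≥0) (N j : ℕ) (ω : Ω) : TT X s t N j ω ≤ PP X s t N j (N + 1) ω := by
  have key : ∀ M, 1 + ∑ k ∈ Finset.range M, |dd X s t N k ω| ^ j ≤ PP X s t N j M ω := by
    intro M
    induction M with
    | zero => simp [PP]
    | succ M ih =>
      unfold PP at *
      rw [Finset.prod_range_succ, Finset.sum_range_succ]
      have h1 : 0 ≤ |dd X s t N M ω| ^ j := by positivity
      have h2 : 0 ≤ ∑ k ∈ Finset.range M, |dd X s t N k ω| ^ j := Finset.sum_nonneg fun _ _ => by positivity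
      nlinarith
  have := key (N + 1)
  unfold TT
  linarith

lemma TT_allM (h : AP μ X hXmeas F) (s t : ℝ≥0) (N j : ℕ) : AllM μ (TT X s t N j) :=
  AllM.sum _ fun k => (h.allM_dd s t N k).abs.pow j

lemma TT_bound (h : AP μ X hXmeas F) {s t : ℝ≥0} (hst : s ≤ t) (N j p : ℕ) (hj : 2 ≤ j) :
    ∫ ω, TT X s t N j ω ^ p ∂μ ≤ BB μ X t j p := by
  refine le_trans (integral_mono ((h.TT_allM s t N j).pow p).integrable
    ((h.PP_allM s t N j (N+1)).pow p).integrable fun ω => ?_) (h.PP_bound hst N j p hj)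
  exact pow_le_pow_left₀ (TT_nonneg s t N j ω) (TT_le_PP s t N j ω) p

end AP

/-! ### Measurability of the jump functionals -/

section JumpMeas

variable {Ω : Type*} {m : MeasurableSpace Ω} {Y : ℝ≥0 → Ω → ℝ} {s t : ℝ≥0}

lemma Apos_meas (hst : s ≤ t) (hY : ∀ r ≤ t, Measurable (Y r)) (hc : ∀ ω, IsCadlag fun r => Y r ω)
    {n : ℕ} (hn : n ≠ 0) : Measurable (fun ω => Apos (fun r => Y r ω) s t n 0) := by
  have : (fun ω => Apos (fun r => Y r ω) s t n 0) =
      fun ω => ⨆ j, liminf (fun N => Bpos (fun r => Y r ω) s t n (ee j) N) atTop := by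
    ext ω
    exact Apos_eq (hc ω) hst hn
  rw [this]
  refine Measurable.iSup fun j => Measurable.liminf fun N => ?_
  unfold Bpos
  refine Finset.measurable_fun_sum _ fun k hk => ?_
  have hk := Finset.mem_range.1 hk
  have h1 := hY _ (pt_le hst (N := N) (k := k + 1) (by omega))
  have h2 := hY _ (pt_le hst (N := N) (k := k) (by omega))
  have h3 : Measurable (phi n (ee j)) := by
    unfold phi
    fun_prop
  exact h3.comp (h1.sub h2)

lemma Apos_neg_meas (hst : s ≤ t) (hY : ∀ r ≤ t, Measurable (Y r)) (hc : ∀ ω, IsCadlag fun r => Y r ω)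
    {n : ℕ} (hn : n ≠ 0) : Measurable (fun ω => Apos (fun r => - Y r ω) s t n 0) :=
  Apos_meas (Y := fun r ω => - Y r ω) hst (fun r hr => (hY r hr).neg) (fun ω => (hc ω).neg) hn

lemma jsum_meas (hst : s ≤ t) (hY : ∀ r ≤ t, Measurable (Y r)) (hc : ∀ ω, IsCadlag fun r => Y r ω)
    {n : ℕ} (hn : n ≠ 0) : Measurable (fun ω => jsum (fun r => Y r ω) s t n) := by
  have h1 := Apos_meas hst hY hc hn
  have h2 := Apos_neg_meas hst hY hc hn
  simp only [fun ω => jsum_eq (hc ω) s t hn]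
  refine Measurable.ite ?_ measurable_const ?_
  · exact (h1.add h2) (measurableSet_singleton _)
  · exact h1.ennreal_toReal.add (h2.ennreal_toReal.const_mul _)

lemma Qe_meas (hst : s ≤ t) (hY : ∀ r ≤ t, Measurable (Y r)) (hc : ∀ ω, IsCadlag fun r => Y r ω)
    {n : ℕ} (hn : n ≠ 0) : Measurable (fun ω => Qe (fun r => Y r ω) s t n) := by
  have h1 := Apos_meas hst hY hc hn
  have h2 := Apos_neg_meas hst hY hc hn
  simp only [fun ω => Qe_eq (hc ω) s t hn]
  exact h1.add h2

lemma jabs_nonneg (f : ℝ≥0 → ℝ) (s t : ℝ≥0) (n : ℕ) : 0 ≤ jabs f s t n :=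
  tsum_nonneg fun u => jabs_nonneg_aux f s t n u

lemma jabs_eq_toReal (f : ℝ≥0 → ℝ) (s t : ℝ≥0) (n : ℕ) : jabs f s t n = (Qe f s t n).toReal := by
  by_cases h : JSummable f s t n
  · rw [← ofReal_jabs h, ENNReal.toReal_ofReal (jabs_nonneg _ _ _ _)]
  · have h2 : Qe f s t n = ⊤ := by
      by_contra h3
      exact h (jsummable_iff.2 h3)
    rw [h2]
    exact tsum_eq_zero_of_not_summable h

lemma jabs_meas (hst : s ≤ t) (hY : ∀ r ≤ t, Measurable (Y r)) (hc : ∀ ω, IsCadlag fun r => Y r ω)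
    {n : ℕ} (hn : n ≠ 0) : Measurable (fun ω => jabs (fun r => Y r ω) s t n) := by
  simp only [jabs_eq_toReal]
  exact (Qe_meas hst hY hc hn).ennreal_toReal

lemma abs_jsum_le' (f : ℝ≥0 → ℝ) (s t : ℝ≥0) (n : ℕ) : |jsum f s t n| ≤ jabs f s t n := by
  by_cases h : JSummable f s t n
  · exact abs_jsum_le h
  · have : jsum f s t n = 0 := tsum_eq_zero_of_not_summable fun h2 => h (jsummable_iff'.1 h2)
    rw [this, abs_zero]
    exact jabs_nonneg _ _ _ _

end JumpMeas

namespace AP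

variable {Ω : Type*} {mΩ : MeasurableSpace Ω} {μ : Measure Ω} [IsProbabilityMeasure μ]
    {X : ℝ≥0 → Ω → ℝ} {hXmeas : ∀ t, StronglyMeasurable (X t)} {F : ℕ → ℝ≥0 → ℝ}

lemma lintegral_Qe_pow (h : AP μ X hXmeas F) {s t : ℝ≥0} (hst : s ≤ t) (j p : ℕ) (hj : 2 ≤ j) :
    ∫⁻ ω, Qe (fun r => X r ω) s t j ^ p ∂μ ≤ 2 ^ p * ENNReal.ofReal (BB μ X t j p) := by
  have h1 : ∀ ω, Qe (fun r => X r ω) s t j ^ p ≤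
      2 ^ p * liminf (fun N => ENNReal.ofReal (TT X s t N j ω ^ p)) atTop := by
    intro ω
    have h2 := pow_le_pow_left' (Qe_le_liminf (h.hcadlag ω) hst (n := j) (by omega)) p
    rw [mul_pow] at h2
    refine h2.trans (mul_le_mul_right ?_ _)
    have hm : Monotone (fun x : ENNReal => x ^ p) := fun a b hab => pow_le_pow_left' hab p
    have h3 := hm.map_liminf_of_continuousAt (F := atTop)
      (fun N => ENNReal.ofReal (TT X s t N j ω)) (by exact (ENNReal.continuous_pow p).continuousAt)
    simp only [ENNReal.ofReal_pow (TT_nonneg s t _ j ω)]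
    exact h3.le
  calc _ ≤ ∫⁻ ω, 2 ^ p * liminf (fun N => ENNReal.ofReal (TT X s t N j ω ^ p)) atTop ∂μ :=
        lintegral_mono h1
    _ = 2 ^ p * ∫⁻ ω, liminf (fun N => ENNReal.ofReal (TT X s t N j ω ^ p)) atTop ∂μ := by
        refine lintegral_const_mul' _ _ (by simp)
    _ ≤ 2 ^ p * liminf (fun N => ∫⁻ ω, ENNReal.ofReal (TT X s t N j ω ^ p) ∂μ) atTop := by
        gcongr
        exact lintegral_liminf_le fun N => ((h.TT_allM s t N j).pow p).meas.ennreal_ofReal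
    _ ≤ _ := by
        gcongr
        refine liminf_le_of_frequently_le' (Frequently.of_forall fun N => ?_)
        rw [← ofReal_integral_eq_lintegral_ofReal ((h.TT_allM s t N j).pow p).integrable
          (Eventually.of_forall fun ω => pow_nonneg (TT_nonneg s t N j ω) p)]
        exact ENNReal.ofReal_le_ofReal (h.TT_bound hst N j p hj)

lemma jsummable_ae (h : AP μ X hXmeas F) {s t : ℝ≥0} (hst : s ≤ t) (j : ℕ) (hj : 2 ≤ j) :
    ∀ᵐ ω ∂μ, JSummable (fun r => X r ω) s t j := by
  have h1 := h.lintegral_Qe_pow hst j 1 hj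
  simp only [pow_one] at h1
  have h2 := ae_lt_top (Qe_meas hst (fun r _ => (hXmeas r).measurable) h.hcadlag (n := j) (by omega))
    (ne_top_of_le_ne_top (ENNReal.mul_ne_top (by simp) (by simp)) h1)
  filter_upwards [h2] with ω hω
  exact jsummable_iff.2 hω.ne

lemma jabs_allM (h : AP μ X hXmeas F) {s t : ℝ≥0} (hst : s ≤ t) (j : ℕ) (hj : 2 ≤ j) :
    AllM μ (fun ω => jabs (fun r => X r ω) s t j) := by
  have hm := jabs_meas hst (fun r _ => (hXmeas r).measurable) h.hcadlag (n := j) (by omega)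
  refine ⟨hm, fun p => ⟨((measurable_id.abs.pow_const p).comp hm).aestronglyMeasurable, ?_⟩⟩
  refine lt_of_le_of_lt (lintegral_mono fun ω => ?_) (lt_of_le_of_lt (h.lintegral_Qe_pow hst j p hj)
    (ENNReal.mul_lt_top (by finiteness) (by simp)))
  rw [Real.enorm_eq_ofReal (by positivity)]
  simp only
  rw [abs_of_nonneg (jabs_nonneg _ _ _ _),
    ENNReal.ofReal_pow (jabs_nonneg _ _ _ _), jabs_eq_toReal]
  exact pow_le_pow_left' ENNReal.ofReal_toReal_le p

lemma jsum_allM (h : AP μ X hXmeas F) {s t : ℝ≥0} (hst : s ≤ t) (j : ℕ) (hj : 2 ≤ j) :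
    AllM μ (fun ω => jsum (fun r => X r ω) s t j) :=
  (h.jabs_allM hst j hj).of_le (jsum_meas hst (fun r _ => (hXmeas r).measurable) h.hcadlag (by omega))
    fun ω => (abs_jsum_le' _ _ _ _).trans (le_abs_self _)

/-- power sums -/
noncomputable def SS (X : ℝ≥0 → Ω → ℝ) (s t : ℝ≥0) (N j : ℕ) (ω : Ω) : ℝ :=
  ∑ k ∈ Finset.range (N + 1), dd X s t N k ω ^ j

lemma SS_allM (h : AP μ X hXmeas F) (s t : ℝ≥0) (N j : ℕ) : AllM μ (SS X s t N j) :=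
  AllM.sum _ fun k => (h.allM_dd s t N k).pow j

lemma abs_SS_le (s t : ℝ≥0) (N j : ℕ) (ω : Ω) : |SS X s t N j ω| ≤ TT X s t N j ω := by
  refine (Finset.abs_sum_le_sum_abs _ _).trans (le_of_eq ?_)
  simp only [TT, abs_pow]

noncomputable def HH (X : ℝ≥0 → Ω → ℝ) (s t : ℝ≥0) (N j : ℕ) (ω : Ω) : ℝ :=
  1 + (TT X s t N j ω + jabs (fun r => X r ω) s t j) +
    (TT X s t N (j + 1) ω + jabs (fun r => X r ω) s t (j + 1))

lemma one_le_HH (s t : ℝ≥0) (N j : ℕ) (ω : Ω) : 1 ≤ HH X s t N j ω := by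
  unfold HH
  linarith [TT_nonneg (X := X) s t N j ω, TT_nonneg (X := X) s t N (j + 1) ω,
    jabs_nonneg (fun r => X r ω) s t j, jabs_nonneg (fun r => X r ω) s t (j + 1)]

lemma HH_allM (h : AP μ X hXmeas F) {s t : ℝ≥0} (hst : s ≤ t) (N j : ℕ) (hj : 2 ≤ j) :
    AllM μ (HH X s t N j) :=
  ((AllM.const 1).add ((h.TT_allM s t N j).add (h.jabs_allM hst j hj))).add
    ((h.TT_allM s t N (j + 1)).add (h.jabs_allM hst (j + 1) (by omega)))

lemma _root_.AllM.add_four {Z W : Ω → ℝ} (hZ : AllM μ Z) (hW : AllM μ W) :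
    ∫ ω, (Z ω + W ω) ^ 4 ∂μ ≤ 8 * (∫ ω, Z ω ^ 4 ∂μ + ∫ ω, W ω ^ 4 ∂μ) := by
  have i1 := (hZ.pow 4).integrable
  have i2 := (hW.pow 4).integrable
  rw [← integral_add i1 i2, ← integral_const_mul]
  refine integral_mono ((hZ.add hW).pow 4).integrable ((i1.add i2).const_mul 8) fun ω => ?_
  simp only [Pi.add_apply]
  nlinarith [sq_nonneg (Z ω ^ 2 - W ω ^ 2), sq_nonneg (Z ω * (Z ω - W ω)), sq_nonneg (W ω * (Z ω - W ω)),
    sq_nonneg ((Z ω - W ω) ^ 2), sq_nonneg ((Z ω - W ω) * (Z ω + W ω))]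

lemma HH_bound (h : AP μ X hXmeas F) {s t : ℝ≥0} (hst : s ≤ t) (j : ℕ) (hj : 2 ≤ j) :
    ∃ C, ∀ N, ∫ ω, HH X s t N j ω ^ 4 ∂μ ≤ C := by
  have hJ := h.jabs_allM hst j hj
  have hJ' := h.jabs_allM hst (j + 1) (by omega)
  refine ⟨8 * (8 * (1 + 8 * (BB μ X t j 4 + ∫ ω, (jabs (fun r => X r ω) s t j) ^ 4 ∂μ)) +
    8 * (BB μ X t (j + 1) 4 + ∫ ω, (jabs (fun r => X r ω) s t (j + 1)) ^ 4 ∂μ)), fun N => ?_⟩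
  have hT := h.TT_allM s t N j
  have hT' := h.TT_allM s t N (j + 1)
  have h1 := ((AllM.const (μ := μ) 1).add (hT.add hJ)).add_four (hT'.add hJ')
  have h2 := (AllM.const (μ := μ) 1).add_four (hT.add hJ)
  have h3 := hT.add_four hJ
  have h4 := hT'.add_four hJ'
  have h5 := h.TT_bound hst N j 4 hj
  have h6 := h.TT_bound hst N (j + 1) 4 (by omega)
  have h7 : ∫ ω, (1 : ℝ) ^ 4 ∂μ = 1 := by simp
  rw [h7] at h2
  unfold HH
  linarith

lemma SS_tendsto_L2 (h : AP μ X hXmeas F) {s t : ℝ≥0} (hst : s ≤ t) (j : ℕ) (hj : 2 ≤ j) :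
    Tendsto (fun N => ∫ ω, (SS X s t N (j + 1) ω - jsum (fun r => X r ω) s t (j + 1)) ^ 2 ∂μ) atTop (𝓝 0) := by
  obtain ⟨C, hC⟩ := h.HH_bound hst j hj
  have hV := h.jsum_allM hst (j + 1) (by omega)
  set V := fun ω => jsum (fun r => X r ω) s t (j + 1)
  set W : ℕ → Ω → ℝ := fun N ω => (SS X s t N (j + 1) ω - V ω) / HH X s t N j ω with hW
  have hHpos : ∀ N ω, 0 < HH X s t N j ω := fun N ω => lt_of_lt_of_le one_pos (one_le_HH _ _ _ _ _)
  have hWle : ∀ N ω, |W N ω| ≤ 1 := by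
    intro N ω
    simp only [hW, abs_div, abs_of_pos (hHpos N ω)]
    rw [div_le_one (hHpos N ω)]
    refine (abs_sub _ _).trans ?_
    have h1 := abs_SS_le (X := X) s t N (j + 1) ω
    have h2 : |V ω| ≤ _ := abs_jsum_le' (fun r => X r ω) s t (j + 1)
    unfold HH
    linarith [TT_nonneg (X := X) s t N j ω, jabs_nonneg (fun r => X r ω) s t j]
  have hWm : ∀ N, Measurable (W N) := fun N =>
    (((h.SS_allM s t N (j + 1)).sub hV).meas).div (h.HH_allM hst N j hj).meas
  have hWM : ∀ N, AllM μ (W N) := fun N => AllM.of_le (hWm N) (AllM.const 1) (fun ω => by simpa using hWle N ω)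
  have hW0 : ∀ᵐ ω ∂μ, Tendsto (fun N => W N ω) atTop (𝓝 0) := by
    filter_upwards [h.jsummable_ae hst j hj, h.jsummable_ae hst (j + 1) (by omega)] with ω h1 h2
    rw [Metric.tendsto_nhds]
    intro ε hε
    have he : 0 < ε / (2 * (j + 2)) := by positivity
    filter_upwards [partition_error (h.hcadlag ω) hst (by omega) h1 h2 he] with N hN
    rw [Real.dist_eq, sub_zero]
    simp only [hW, abs_div, abs_of_pos (hHpos N ω)]
    rw [div_lt_iff₀ (hHpos N ω)]
    have h3 : ((j : ℝ) + 2) * (ε / (2 * (j + 2))) = ε / 2 := by field_simp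
    rw [h3] at hN
    refine lt_of_le_of_lt hN ?_
    have h4 : ∑ k ∈ Finset.range (N + 1), |incr (fun r => X r ω) s t N k| ^ j = TT X s t N j ω := rfl
    rw [h4]
    have h5 : TT X s t N j ω + jabs (fun r => X r ω) s t j ≤ HH X s t N j ω := by
      unfold HH
      linarith [TT_nonneg (X := X) s t N (j + 1) ω, jabs_nonneg (fun r => X r ω) s t (j + 1)]
    have := hHpos N ω
    nlinarith
  have hW4 : Tendsto (fun N => ∫ ω, (W N ω ^ 2) ^ 2 ∂μ) atTop (𝓝 0) := by
    have := tendsto_integral_of_dominated_convergence (μ := μ) (F := fun N ω => (W N ω ^ 2) ^ 2)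
      (f := fun _ => 0) (fun _ => 1) (fun N => (((hWM N).pow 2).pow 2).meas.aestronglyMeasurable)
      (integrable_const _) (fun N => Eventually.of_forall fun ω => by
        rw [Real.norm_eq_abs, abs_pow, abs_pow]
        exact pow_le_one₀ (by positivity) (pow_le_one₀ (by positivity) (hWle N ω)))
      (by
        filter_upwards [hW0] with ω hω
        simpa using (hω.pow 2).pow 2)
    simpa using this
  have hlim : Tendsto (fun N => √(∫ ω, (W N ω ^ 2) ^ 2 ∂μ) * √C) atTop (𝓝 0) := by
    have := (hW4.sqrt).mul_const (√C)
    simpa using this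
  refine squeeze_zero (fun N => integral_nonneg fun ω => sq_nonneg _) (fun N => ?_) hlim
  have hH := h.HH_allM hst N j hj
  calc ∫ ω, (SS X s t N (j + 1) ω - V ω) ^ 2 ∂μ = ∫ ω, |W N ω ^ 2 * HH X s t N j ω ^ 2| ∂μ := by
        congr 1
        ext ω
        rw [abs_of_nonneg (by positivity), ← mul_pow]
        simp only [hW]
        rw [div_mul_cancel₀ _ (hHpos N ω).ne']
    _ ≤ _ := integral_abs_mul_le ((hWM N).pow 2).memLp_two (hH.pow 2).memLp_two
    _ ≤ _ := by
        gcongr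
        refine le_trans (le_of_eq ?_) (hC N)
        congr 1
        ext ω
        ring

end AP

namespace AP

variable {Ω : Type*} {mΩ : MeasurableSpace Ω} {μ : Measure Ω} [IsProbabilityMeasure μ]
    {X : ℝ≥0 → Ω → ℝ} {hXmeas : ∀ t, StronglyMeasurable (X t)} {F : ℕ → ℝ≥0 → ℝ}

/-- centred partial power sums -/
noncomputable def ZZ (μ : Measure Ω) (X : ℝ≥0 → Ω → ℝ) (s t : ℝ≥0) (N j M : ℕ) (ω : Ω) : ℝ :=
  ∑ k ∈ Finset.range M, (dd X s t N k ω ^ j - ∫ ω', dd X s t N k ω' ^ j ∂μ)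

lemma ZZ_allM (h : AP μ X hXmeas F) (s t : ℝ≥0) (N j M : ℕ) : AllM μ (ZZ μ X s t N j M) :=
  AllM.sum _ fun k => ((h.allM_dd s t N k).pow j).sub_const _

lemma ZZ_meas (s t : ℝ≥0) (N j M : ℕ) :
    Measurable[Filtration.natural X hXmeas (pt s t N M)] (ZZ μ X s t N j M) := by
  unfold ZZ
  refine Finset.measurable_fun_sum _ fun i hi => ?_
  exact (show Measurable (fun x : ℝ => x ^ j - ∫ ω', dd X s t N i ω' ^ j ∂μ) by fun_prop).comp
    (dd_meas hXmeas s t (N := N) (Finset.mem_range.1 hi))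

lemma meas_pt {s : ℝ≥0} {U : Ω → ℝ} (hU : Measurable[Filtration.natural X hXmeas s] U) (t : ℝ≥0) (N k : ℕ) :
    Measurable[Filtration.natural X hXmeas (pt s t N k)] U :=
  hU.mono ((Filtration.natural X hXmeas).mono (pt_ge s t N k)) le_rfl

lemma step_zero (h : AP μ X hXmeas F) (s t : ℝ≥0) (N j k : ℕ) {U : Ω → ℝ}
    (hU : Measurable[Filtration.natural X hXmeas (pt s t N k)] U) :
    ∫ ω, U ω * (dd X s t N k ω ^ j - ∫ ω', dd X s t N k ω' ^ j ∂μ) ∂μ = 0 := by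
  have h1 := h.indep_mul (pt_mono s t N (Nat.le_succ k)) hU
    (g := fun x => x ^ j - ∫ ω', dd X s t N k ω' ^ j ∂μ) (by fun_prop)
  have h2 : ∫ ω, U ω * (dd X s t N k ω ^ j - ∫ ω', dd X s t N k ω' ^ j ∂μ) ∂μ =
    (∫ ω, U ω ∂μ) * ∫ ω, (dd X s t N k ω ^ j - ∫ ω', dd X s t N k ω' ^ j ∂μ) ∂μ := h1
  rw [h2, integral_sub ((h.allM_dd s t N k).pow j).integrable (integrable_const _)]
  simp

lemma step_sq (h : AP μ X hXmeas F) (s t : ℝ≥0) (N j k : ℕ) {U : Ω → ℝ}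
    (hU : Measurable[Filtration.natural X hXmeas (pt s t N k)] U) :
    ∫ ω, U ω * (dd X s t N k ω ^ j - ∫ ω', dd X s t N k ω' ^ j ∂μ) ^ 2 ∂μ =
      (∫ ω, U ω ∂μ) * (∫ ω, dd X s t N k ω ^ (2 * j) ∂μ - (∫ ω, dd X s t N k ω ^ j ∂μ) ^ 2) := by
  have h1 := h.indep_mul (pt_mono s t N (Nat.le_succ k)) hU
    (g := fun x => (x ^ j - ∫ ω', dd X s t N k ω' ^ j ∂μ) ^ 2) (by fun_prop)
  have h2 : ∫ ω, U ω * (dd X s t N k ω ^ j - ∫ ω', dd X s t N k ω' ^ j ∂μ) ^ 2 ∂μ =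
    (∫ ω, U ω ∂μ) * ∫ ω, (dd X s t N k ω ^ j - ∫ ω', dd X s t N k ω' ^ j ∂μ) ^ 2 ∂μ := h1
  rw [h2]
  congr 1
  set c := ∫ ω', dd X s t N k ω' ^ j ∂μ
  have e : ∀ ω, (dd X s t N k ω ^ j - c) ^ 2 = dd X s t N k ω ^ (2 * j) - (2 * c * dd X s t N k ω ^ j - c ^ 2) := by
    intro ω
    rw [mul_comm 2 j, pow_mul]; ring
  simp only [e]
  have hd := h.allM_dd s t N k
  have i2 : Integrable (fun ω => 2 * c * dd X s t N k ω ^ j) μ := (hd.pow j).integrable.const_mul _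
  have i3 : Integrable (fun ω => 2 * c * dd X s t N k ω ^ j - c ^ 2) μ := i2.sub (integrable_const _)
  rw [integral_sub (hd.pow _).integrable i3, integral_sub i2 (integrable_const _), integral_const_mul]
  simp only [integral_const, probReal_univ, one_smul]
  change _ - (2 * c * c - c ^ 2) = _
  ring

lemma ZZ_lin (h : AP μ X hXmeas F) (s t : ℝ≥0) (N j M : ℕ) {U : Ω → ℝ} (hUM : AllM μ U)
    (hU : Measurable[Filtration.natural X hXmeas s] U) :
    ∫ ω, U ω * ZZ μ X s t N j M ω ∂μ = 0 := by
  unfold ZZ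
  simp only [Finset.mul_sum]
  rw [integral_finsetSum _ fun k _ => (hUM.mul (((h.allM_dd s t N k).pow j).sub_const _)).integrable]
  exact Finset.sum_eq_zero fun k _ => h.step_zero s t N j k (meas_pt hU t N k)

lemma ZZ_sq (h : AP μ X hXmeas F) (s t : ℝ≥0) (N j M : ℕ) {U : Ω → ℝ} (hUM : AllM μ U)
    (hU : Measurable[Filtration.natural X hXmeas s] U) :
    ∫ ω, U ω * ZZ μ X s t N j M ω ^ 2 ∂μ = (∫ ω, U ω ∂μ) * ∑ k ∈ Finset.range M,
      (∫ ω, dd X s t N k ω ^ (2 * j) ∂μ - (∫ ω, dd X s t N k ω ^ j ∂μ) ^ 2) := by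
  induction M with
  | zero => simp [ZZ]
  | succ M ih =>
    have hZ := h.ZZ_allM s t N j M
    have he := ((h.allM_dd s t N M).pow j).sub_const (∫ ω', dd X s t N M ω' ^ j ∂μ)
    have hUZ : Measurable[Filtration.natural X hXmeas (pt s t N M)] (fun ω => 2 * (U ω * ZZ μ X s t N j M ω)) :=
      ((meas_pt hU t N M).mul (ZZ_meas s t N j M)).const_mul 2
    have h1 := h.step_zero s t N j M hUZ
    have h2 := h.step_sq s t N j M (meas_pt hU t N M)
    have e : ∀ ω, U ω * ZZ μ X s t N j (M + 1) ω ^ 2 = U ω * ZZ μ X s t N j M ω ^ 2 +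
        (2 * (U ω * ZZ μ X s t N j M ω) * (dd X s t N M ω ^ j - ∫ ω', dd X s t N M ω' ^ j ∂μ) +
          U ω * (dd X s t N M ω ^ j - ∫ ω', dd X s t N M ω' ^ j ∂μ) ^ 2) := by
      intro ω
      unfold ZZ
      rw [Finset.sum_range_succ]
      ring
    simp only [e]
    have i1 := (hUM.mul (hZ.pow 2)).integrable
    have i2 := (((AllM.const (μ := μ) 2).mul (hUM.mul hZ)).mul he).integrable
    have i3 := (hUM.mul (he.pow 2)).integrable
    have i4 := i2.add i3
    rw [integral_add i1 (by exact i4), integral_add i2 i3, ih, h1, h2, Finset.sum_range_succ]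
    ring

/-- compensated jump sums -/
noncomputable def DD (X : ℝ≥0 → Ω → ℝ) (F : ℕ → ℝ≥0 → ℝ) (s t : ℝ≥0) (j : ℕ) (ω : Ω) : ℝ :=
  jsum (fun r => X r ω) s t j - (cum F t j - cum F s j)

lemma DD_allM (h : AP μ X hXmeas F) {s t : ℝ≥0} (hst : s ≤ t) (j : ℕ) (hj : 2 ≤ j) :
    AllM μ (DD X F s t j) := (h.jsum_allM hst j hj).sub_const _

lemma ZZ_tendsto (h : AP μ X hXmeas F) {s t : ℝ≥0} (hst : s ≤ t) (j : ℕ) (hj : 2 ≤ j) :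
    Tendsto (fun N => ∫ ω, (ZZ μ X s t N (j + 1) (N + 1) ω - DD X F s t (j + 1) ω) ^ 2 ∂μ) atTop (𝓝 0) := by
  have h1 := h.SS_tendsto_L2 hst j hj
  have h2 := h.tendsto_sum_moment hst j
  have h3 : Tendsto (fun N => 2 * ∫ ω, (SS X s t N (j + 1) ω - jsum (fun r => X r ω) s t (j + 1)) ^ 2 ∂μ +
      2 * ((∑ k ∈ Finset.range (N + 1), ∫ ω, dd X s t N k ω ^ (j + 1) ∂μ) -
        (cum F t (j + 1) - cum F s (j + 1))) ^ 2) atTop (𝓝 0) := by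
    have := (h1.const_mul 2).add (((h2.sub_const (cum F t (j + 1) - cum F s (j + 1))).pow 2).const_mul 2)
    simpa using this
  refine squeeze_zero (fun N => integral_nonneg fun ω => sq_nonneg _) (fun N => ?_) h3
  set c := (∑ k ∈ Finset.range (N + 1), ∫ ω, dd X s t N k ω ^ (j + 1) ∂μ) -
        (cum F t (j + 1) - cum F s (j + 1)) with hc
  have hS := (h.SS_allM s t N (j + 1)).sub (h.jsum_allM hst (j + 1) (by omega))
  have i1 := ((hS.pow 2).integrable).const_mul 2
  calc _ ≤ ∫ ω, (2 * (SS X s t N (j + 1) ω - jsum (fun r => X r ω) s t (j + 1)) ^ 2 + 2 * c ^ 2) ∂μ := by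
        refine integral_mono (((h.ZZ_allM s t N (j + 1) (N + 1)).sub (h.DD_allM hst (j + 1) (by omega))).pow 2).integrable
          (i1.add (integrable_const _)) fun ω => ?_
        have e : ZZ μ X s t N (j + 1) (N + 1) ω - DD X F s t (j + 1) ω =
            (SS X s t N (j + 1) ω - jsum (fun r => X r ω) s t (j + 1)) - c := by
          simp only [ZZ, DD, SS, Finset.sum_sub_distrib, hc]
          ring
        simp only [e]
        nlinarith [sq_nonneg ((SS X s t N (j + 1) ω - jsum (fun r => X r ω) s t (j + 1)) + c)]
    _ = _ := by
        rw [integral_add i1 (integrable_const _), integral_const_mul]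
        simp

lemma cross_tendsto (h : AP μ X hXmeas F) {s t : ℝ≥0} (hst : s ≤ t) (j : ℕ) (hj : 2 ≤ j) {U : Ω → ℝ}
    (hUM : AllM μ U) :
    Tendsto (fun N => ∫ ω, U ω * (ZZ μ X s t N (j + 1) (N + 1) ω - DD X F s t (j + 1) ω) ∂μ) atTop (𝓝 0) := by
  have h1 : Tendsto (fun N => √(∫ ω, U ω ^ 2 ∂μ) *
      √(∫ ω, (ZZ μ X s t N (j + 1) (N + 1) ω - DD X F s t (j + 1) ω) ^ 2 ∂μ)) atTop (𝓝 0) := by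
    simpa using ((h.ZZ_tendsto hst j hj).sqrt).const_mul (√(∫ ω, U ω ^ 2 ∂μ))
  refine squeeze_zero_norm (fun N => ?_) h1
  refine (norm_integral_le_integral_norm _).trans ?_
  exact integral_abs_mul_le hUM.memLp_two
    ((h.ZZ_allM s t N (j + 1) (N + 1)).sub (h.DD_allM hst (j + 1) (by omega))).memLp_two

lemma DD_lin (h : AP μ X hXmeas F) {s t : ℝ≥0} (hst : s ≤ t) (j : ℕ) (hj : 2 ≤ j) {U : Ω → ℝ}
    (hUM : AllM μ U) (hU : Measurable[Filtration.natural X hXmeas s] U) :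
    ∫ ω, U ω * DD X F s t (j + 1) ω ∂μ = 0 := by
  have h1 := h.cross_tendsto hst j hj hUM
  have e : ∀ N, ∫ ω, U ω * (ZZ μ X s t N (j + 1) (N + 1) ω - DD X F s t (j + 1) ω) ∂μ =
      - ∫ ω, U ω * DD X F s t (j + 1) ω ∂μ := by
    intro N
    simp only [mul_sub]
    rw [integral_sub (hUM.mul (h.ZZ_allM s t N (j + 1) (N + 1))).integrable
      (hUM.mul (h.DD_allM hst (j + 1) (by omega))).integrable, h.ZZ_lin s t N _ _ hUM hU, zero_sub]
  simp only [e] at h1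
  have := tendsto_nhds_unique h1 tendsto_const_nhds
  linarith

lemma DD_sq (h : AP μ X hXmeas F) {s t : ℝ≥0} (hst : s ≤ t) (j : ℕ) (hj : 2 ≤ j) {U : Ω → ℝ}
    (hUM : AllM μ U) (hU : Measurable[Filtration.natural X hXmeas s] U) (hU1 : ∀ ω, |U ω| ≤ 1) :
    ∫ ω, U ω * DD X F s t (j + 1) ω ^ 2 ∂μ =
      (∫ ω, U ω ∂μ) * (cum F t (2 * (j + 1)) - cum F s (2 * (j + 1))) := by
  have hD := h.DD_allM hst (j + 1) (by omega)
  have hUD := hUM.mul hD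
  have h1 := (h.cross_tendsto hst j hj hUD).const_mul 2
  have h2 : Tendsto (fun N => ∫ ω, U ω * (ZZ μ X s t N (j + 1) (N + 1) ω - DD X F s t (j + 1) ω) ^ 2 ∂μ)
      atTop (𝓝 0) := by
    refine squeeze_zero_norm (fun N => ?_) (h.ZZ_tendsto hst j hj)
    have hZ := (h.ZZ_allM s t N (j + 1) (N + 1)).sub hD
    refine (norm_integral_le_integral_norm _).trans ?_
    refine integral_mono (hUM.mul (hZ.pow 2)).integrable.norm (hZ.pow 2).integrable fun ω => ?_
    simp only [Real.norm_eq_abs, abs_mul, abs_pow, sq_abs]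
    exact mul_le_of_le_one_left (sq_nonneg _) (hU1 ω)
  have h3 : Tendsto (fun N => ∫ ω, U ω * ZZ μ X s t N (j + 1) (N + 1) ω ^ 2 ∂μ) atTop
      (𝓝 (∫ ω, U ω * DD X F s t (j + 1) ω ^ 2 ∂μ)) := by
    have h4 := (h1.add h2).add_const (∫ ω, U ω * DD X F s t (j + 1) ω ^ 2 ∂μ)
    simp only [mul_zero, zero_add] at h4
    refine h4.congr fun N => ?_
    have hZ := h.ZZ_allM s t N (j + 1) (N + 1)
    have i1 := (hUD.mul (hZ.sub hD)).integrable.const_mul 2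
    have i2 := (hUM.mul ((hZ.sub hD).pow 2)).integrable
    have i3 := (hUM.mul (hD.pow 2)).integrable
    rw [← integral_const_mul, ← integral_add i1 i2, ← integral_add (by exact i1.add i2) i3]
    congr 1
    ext ω
    ring
  have h5 : Tendsto (fun N => ∫ ω, U ω * ZZ μ X s t N (j + 1) (N + 1) ω ^ 2 ∂μ) atTop
      (𝓝 ((∫ ω, U ω ∂μ) * (cum F t (2 * (j + 1)) - cum F s (2 * (j + 1))))) := by
    have h6 := h.tendsto_sum_moment hst (2 * j + 1)
    have h7 := h.tendsto_sum_sq hst j (by omega)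
    have h8 := (h6.sub h7).const_mul (∫ ω, U ω ∂μ)
    rw [sub_zero] at h8
    refine h8.congr fun N => ?_
    rw [h.ZZ_sq s t N (j + 1) (N + 1) hUM hU, Finset.sum_sub_distrib]
    rfl
  exact tendsto_nhds_unique h3 h5

end AP

lemma jsum_add {f : ℝ≥0 → ℝ} {s t : ℝ≥0} (hst : s ≤ t) {n : ℕ} (h : JSummable f 0 t n) :
    jsum f 0 t n = jsum f 0 s n + jsum f s t n := by
  have h1 : JSummable f 0 s n := h.mono (Set.Ioc_subset_Ioc le_rfl hst)
  have h2 : JSummable f s t n := h.mono (Set.Ioc_subset_Ioc zero_le le_rfl)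
  unfold jsum
  rw [← (jsummable_iff'.2 h1).tsum_add (jsummable_iff'.2 h2)]
  congr 1
  ext u
  rw [← Set.Ioc_union_Ioc_eq_Ioc (zero_le : (0 : ℝ≥0) ≤ s) hst, Set.indicator_union_of_disjoint]
  rw [Set.disjoint_left]
  intro a ha hb
  exact absurd ha.2 (not_le.2 hb.1)

/-- For `n ≥ 3`, the predictable quadratic variation of the Teugels martingale
`Y^{(n)}_t = X^{(n)}_t - F_n(t)` is `⟨Y^{(n)}⟩_t = F_{2n}(t)`; equivalently, the process
`(Y^{(n)}_t)^2 - F_{2n}(t)` is a martingale with respect to the natural filtration of `X`. -/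
theorem teugels_predictable_quadratic_variation
    {Ω : Type*} {mΩ : MeasurableSpace Ω} (μ : Measure Ω) [IsProbabilityMeasure μ]
    (X : ℝ≥0 → Ω → ℝ) (hXmeas : ∀ t, StronglyMeasurable (X t))
    (hX0 : ∀ ω, X 0 ω = 0)
    (hindep : ∀ s t : ℝ≥0, s ≤ t →
      Indep (MeasurableSpace.comap (fun ω => X t ω - X s ω) (inferInstance : MeasurableSpace ℝ))
        (MeasureTheory.Filtration.natural X hXmeas s) μ)
    (hcontP : ∀ (t : ℝ≥0) (ε : ℝ), 0 < ε →
      Tendsto (fun s => μ {ω | ε ≤ |X s ω - X t ω|}) (𝓝 t) (𝓝 0))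
    (hcadlag : ∀ ω, IsCadlag fun t => X t ω)
    (hmom : ∀ (n : ℕ) (t : ℝ≥0), Integrable (fun ω => |X t ω| ^ n) μ)
    (hcent : ∀ t : ℝ≥0, ∫ ω, X t ω ∂μ = 0)
    (F : ℕ → ℝ≥0 → ℝ)
    (hF : ∀ n, 2 ≤ n → ∀ t : ℝ≥0,
      ∫ ω, X t ω ^ n ∂μ = kendall n fun k => if k = 1 then 0 else F k t)
    (n : ℕ) (hn : 3 ≤ n) :
    Martingale (fun t ω => (variationProc X n t ω - F n t) ^ 2 - F (2 * n) t)
      (MeasureTheory.Filtration.natural X hXmeas) μ := by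
  obtain ⟨j, rfl⟩ : ∃ j, n = j + 1 := ⟨n - 1, by omega⟩
  have hj : 2 ≤ j := by omega
  have h : AP μ X hXmeas F := ⟨hX0, hindep, hcontP, hcadlag, hmom, hcent, hF⟩
  have hVm : ∀ t, Measurable[Filtration.natural X hXmeas t] (variationProc X (j + 1) t) := fun t =>
    @jsum_meas Ω (Filtration.natural X hXmeas t) X 0 t (zero_le) (fun r hr => AP.adapted hXmeas hr)
      hcadlag (j + 1) (by omega)
  have hVM : ∀ t, AllM μ (variationProc X (j + 1) t) := fun t =>
    h.jsum_allM (zero_le) (j + 1) (by omega)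
  have hYm : ∀ t, Measurable[Filtration.natural X hXmeas t]
      (fun ω => variationProc X (j + 1) t ω - F (j + 1) t) := fun t => (hVm t).sub_const _
  have hYM : ∀ t, AllM μ (fun ω => variationProc X (j + 1) t ω - F (j + 1) t) := fun t =>
    (hVM t).sub_const _
  have hGm : ∀ t, StronglyMeasurable[Filtration.natural X hXmeas t]
      (fun ω => (variationProc X (j + 1) t ω - F (j + 1) t) ^ 2 - F (2 * (j + 1)) t) := fun t =>
    (((hYm t).pow_const 2).sub_const _).stronglyMeasurable
  have hGM : ∀ t, AllM μ
      (fun ω => (variationProc X (j + 1) t ω - F (j + 1) t) ^ 2 - F (2 * (j + 1)) t) := fun t =>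
    ((hYM t).pow 2).sub_const _
  refine ⟨hGm, fun s t hst => ?_⟩
  symm
  refine ae_eq_condExp_of_forall_setIntegral_eq ((Filtration.natural X hXmeas).le s)
    (hGM t).integrable (fun A _ _ => (hGM s).integrable.integrableOn) (fun A hA _ => ?_)
    (hGm s).aestronglyMeasurable
  have hA' : MeasurableSet A := (Filtration.natural X hXmeas).le s A hA
  have hc : ∀ k r, 2 ≤ k → AP.cum F r k = F k r := fun k r hk => by
    simp [AP.cum, show k ≠ 1 by omega]
  set Y := fun ω => variationProc X (j + 1) s ω - F (j + 1) s with hY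
  set D := AP.DD X F s t (j + 1) with hD
  have hdec : ∀ᵐ ω ∂μ, variationProc X (j + 1) t ω - F (j + 1) t = Y ω + D ω := by
    filter_upwards [h.jsummable_ae (zero_le : 0 ≤ t) (j + 1) (by omega)] with ω hω
    have h1 : variationProc X (j + 1) t ω = variationProc X (j + 1) s ω +
      jsum (fun r => X r ω) s t (j + 1) := jsum_add hst hω
    simp only [hY, hD, AP.DD, hc (j + 1) _ (by omega), h1]
    ring
  set U : Ω → ℝ := A.indicator (fun _ => 1) with hUdef
  have hU : Measurable[Filtration.natural X hXmeas s] U := measurable_const.indicator hA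
  have hUM : AllM μ U := (AllM.const 1).indicator hA'
  have hU1 : ∀ ω, |U ω| ≤ 1 := fun ω => by
    by_cases hω : ω ∈ A <;> simp [hUdef, hω]
  have hDM : AllM μ D := h.DD_allM hst (j + 1) (by omega)
  have hYM' : AllM μ Y := hYM s
  have hUY : Measurable[Filtration.natural X hXmeas s] (fun ω => U ω * Y ω) := hU.mul (hYm s)
  have e1 := h.DD_lin hst j hj (hUM.mul hYM') hUY
  have e2 := h.DD_sq hst j hj hUM hU hU1
  rw [hc _ _ (by omega), hc _ _ (by omega)] at e2
  have hind : ∀ G : Ω → ℝ, ∫ ω in A, G ω ∂μ = ∫ ω, U ω * G ω ∂μ := by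
    intro G
    rw [← integral_indicator hA']
    congr 1
    ext ω
    by_cases hω : ω ∈ A <;> simp [hUdef, hω]
  rw [hind, hind]
  symm
  set a := F (2 * (j + 1)) t
  set b := F (2 * (j + 1)) s
  calc ∫ ω, U ω * ((variationProc X (j + 1) t ω - F (j + 1) t) ^ 2 - a) ∂μ
      = ∫ ω, (U ω * (Y ω ^ 2 - b) + (2 * (U ω * Y ω * D ω) + (U ω * D ω ^ 2 + (b - a) * U ω))) ∂μ := by
        refine integral_congr_ae ?_
        filter_upwards [hdec] with ω hω
        rw [hω]
        ring
    _ = ∫ ω, U ω * (Y ω ^ 2 - b) ∂μ := by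
        have i1 := (hUM.mul (hGM s)).integrable
        have i2 := (((hUM.mul hYM').mul hDM).integrable).const_mul 2
        have i3 := (hUM.mul (hDM.pow 2)).integrable
        have i4 := hUM.integrable.const_mul (b - a)
        have i5 := i3.add i4
        have i6 := i2.add i5
        rw [integral_add i1 (by exact i6), integral_add i2 (by exact i5), integral_add i3 i4,
          integral_const_mul, integral_const_mul, e1, e2]
        ring
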